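/- arXiv:1904.03088 — 6 statements merged into one kernel-verified Lean document; each statement's English description precedes it below -/
import Mathlib

section
/- Let X be a complex Banach space and let Ω ⊆ ℂ be open. A function f : Ω → X is holomorphic (i.e. complex differentiable at every point of Ω) if and only if f is locally L¹-bounded and there exists a separating set W ⊆ X' such that x' ∘ f : Ω → ℂ is holomorphic for every x' ∈ W. -/
open MeasureTheory

/-!
Let `Y ⊆ X'` be the space of all functionals `y` for which `y ∘ f` is holomorphic, and let
`J : X → Y'` be the evaluation map. The area mean value property turns the `L¹` bound on `f` into
bounds on `y ∘ f` that are locally uniform over the unit ball of `Y`, so the Schwarz lemma and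
Morera's theorem show that `J ∘ f` is holomorphic with values in `Y'`. Hence `Φ ∘ J ∈ Y` for every
`Φ ∈ Y''`, and by Hahn–Banach `J x` is a limit of images of vectors of norm at most `‖J x‖`. As `J`
is injective, successive approximation gives `‖x‖ ≤ 2 ‖J x‖`. So the unit ball of `Y` is norming
for `X` as well, and the argument for `J ∘ f` applies to `f` itself.
-/

section MeanValue

open Metric Set Topology
open scoped Real ENNReal

lemma lintegral_eq_lintegral_lintegral_circleMap (c : ℂ) {F : ℂ → ℝ≥0∞} (hF : Measurable F) :
    ∫⁻ w, F w =
      ∫⁻ r in Ioi 0, ∫⁻ θ in Ioo (-π) π, ENNReal.ofReal r * F (circleMap c r θ) := by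
  have polar_eq_circleMap (p : ℝ × ℝ) :
      c + Complex.polarCoord.symm p = circleMap c p.1 p.2 := by
    simp [Complex.polarCoord_symm_apply, circleMap, Complex.exp_mul_I]
  have measurable_integrand : Measurable fun p : ℝ × ℝ =>
      ENNReal.ofReal p.1 * F (circleMap c p.1 p.2) := by
    unfold circleMap
    fun_prop
  calc ∫⁻ w, F w = ∫⁻ w, F (c + w) := (lintegral_add_left_eq_self F c).symm
    _ = ∫⁻ p in polarCoord.target, ENNReal.ofReal p.1 * F (circleMap c p.1 p.2) := by
      simp only [← Complex.lintegral_comp_polarCoord_symm, polar_eq_circleMap, smul_eq_mul]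
    _ = _ := by
      rw [polarCoord_target, Measure.volume_eq_prod, setLIntegral_prod _
        measurable_integrand.aemeasurable]

variable {E : Type*} [NormedAddCommGroup E] [NormedSpace ℂ E] [CompleteSpace E]

lemma lintegral_enorm_le_lintegral_enorm_circleMap {h : ℂ → E} {c : ℂ} {r : ℝ}
    (hh : DiffContOnCl ℂ h (ball c |r|)) :
    ∫⁻ _ in Ioo (-π) π, ‖h c‖ₑ ≤ ∫⁻ θ in Ioo (-π) π, ‖h (circleMap c r θ)‖ₑ := by
  have integral_circleMap : ∫ θ in Ioo (-π) π, h (circleMap c r θ) = (2 * π) • h c := by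
    rw [← hh.circleAverage, Real.circleAverage_eq_integral_add (-π),
      smul_inv_smul₀ Real.two_pi_pos.ne',
      intervalIntegral.integral_comp_add_right fun θ => h (circleMap c r θ),
      intervalIntegral.integral_of_le (by linarith [Real.pi_pos]), integral_Ioc_eq_integral_Ioo]
    ring_nf
  calc ∫⁻ _ in Ioo (-π) π, ‖h c‖ₑ = ‖(2 * π) • h c‖ₑ := by
        rw [setLIntegral_const, Real.volume_Ioo, sub_neg_eq_add, ← two_mul, enorm_smul,
          Real.enorm_of_nonneg Real.two_pi_pos.le, mul_comm]
    _ ≤ _ := integral_circleMap ▸ enorm_integral_le_lintegral_enorm _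

lemma volume_ball_mul_enorm_le_lintegral {h : ℂ → E} {c : ℂ} {R : ℝ}
    (hh : DifferentiableOn ℂ h (ball c R)) :
    volume (ball c R) * ‖h c‖ₑ ≤ ∫⁻ w in ball c R, ‖h w‖ₑ := by
  classical
  have measurable_indicator : Measurable ((ball c R).indicator fun w => ‖h w‖ₑ) := by
    rw [← piecewise_eq_indicator]
    exact hh.continuousOn.enorm.measurable_piecewise continuousOn_const measurableSet_ball
  rw [mul_comm, ← setLIntegral_const, ← lintegral_indicator measurableSet_ball,
    ← lintegral_indicator measurableSet_ball,
    lintegral_eq_lintegral_lintegral_circleMap c (measurable_const.indicator measurableSet_ball),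
    lintegral_eq_lintegral_lintegral_circleMap c measurable_indicator]
  refine setLIntegral_mono' measurableSet_Ioi fun r (hr : 0 < r) => ?_
  have circleMap_mem_ball (θ : ℝ) : circleMap c r θ ∈ ball c R ↔ r < R := by
    simp [dist_eq_norm, abs_of_pos hr]
  simp only [lintegral_const_mul' _ _ ENNReal.ofReal_ne_top, indicator, circleMap_mem_ball]
  gcongr ENNReal.ofReal r * ?_
  split_ifs with hrR
  · refine lintegral_enorm_le_lintegral_enorm_circleMap <| hh.diffContOnCl_ball ?_
    rw [abs_of_pos hr]
    exact closedBall_subset_ball hrR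
  · rfl

lemma norm_le_setIntegral_div_of_ae_norm_le {h : ℂ → E} {g : ℂ → ℝ} {c z : ℂ} {R r : ℝ}
    (hr : 0 < r) (hz : ball z r ⊆ ball c R) (hh : DifferentiableOn ℂ h (ball c R))
    (hg : IntegrableOn g (ball c R)) (hhg : ∀ᵐ w ∂volume.restrict (ball c R), ‖h w‖ ≤ g w) :
    ‖h z‖ ≤ (∫ w in ball c R, g w) / volume.real (ball z r) := by
  have hg0 : 0 ≤ᵐ[volume.restrict (ball c R)] g := hhg.mono fun w => (norm_nonneg _).trans
  have : volume (ball z r) * ‖h z‖ₑ ≤ ENNReal.ofReal (∫ w in ball c R, g w) :=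
    calc volume (ball z r) * ‖h z‖ₑ
      _ ≤ ∫⁻ w in ball z r, ‖h w‖ₑ := volume_ball_mul_enorm_le_lintegral (hh.mono hz)
      _ ≤ ∫⁻ w in ball c R, ‖h w‖ₑ := lintegral_mono_set hz
      _ ≤ ∫⁻ w in ball c R, ENNReal.ofReal (g w) := lintegral_mono_ae <| hhg.mono fun w hw => by
        rw [← ofReal_norm]
        exact ENNReal.ofReal_le_ofReal hw
      _ = _ := (ofReal_integral_eq_lintegral_ofReal hg hg0).symm
  have hpos : 0 < volume.real (ball z r) :=
    ENNReal.toReal_pos (measure_ball_pos volume z hr).ne' measure_ball_lt_top.ne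
  rw [le_div_iff₀' hpos]
  have := ENNReal.toReal_mono ENNReal.ofReal_ne_top this
  simpa [Measure.real, ENNReal.toReal_ofReal (integral_nonneg_of_ae hg0)] using this

lemma exists_eventually_forall_norm_le_of_ae_norm_le {ι : Type*} {h : ι → ℂ → E} {g : ℂ → ℝ}
    {U : Set ℂ} (hU : IsOpen U) (hg : LocallyIntegrableOn g U)
    (hh : ∀ i, DifferentiableOn ℂ (h i) U)
    (hhg : ∀ i, ∀ᵐ w ∂volume.restrict U, ‖h i w‖ ≤ g w) {c : ℂ} (hc : c ∈ U) :
    ∃ M, ∀ᶠ z in 𝓝 c, ∀ i, ‖h i z‖ ≤ M := by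
  obtain ⟨R, hR, hRU⟩ := nhds_basis_closedBall.mem_iff.1 (hU.mem_nhds hc)
  have ball_subset : ball c R ⊆ U := ball_subset_closedBall.trans hRU
  have integrable_ball : IntegrableOn g (ball c R) :=
    (hg.integrableOn_compact_subset hRU (isCompact_closedBall c R)).mono_set ball_subset_closedBall
  refine ⟨(∫ w in ball c R, g w) / volume.real (ball (0 : ℂ) (R / 2)), ?_⟩
  filter_upwards [ball_mem_nhds c (half_pos hR)] with z hz i
  rw [Measure.real, ← Measure.addHaar_ball_center volume z, ← Measure.real]
  have half_ball_subset : ball z (R / 2) ⊆ ball c R :=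
    ball_subset_ball' (by linarith [mem_ball.1 hz])
  exact norm_le_setIntegral_div_of_ae_norm_le (half_pos hR) half_ball_subset
    ((hh i).mono ball_subset) integrable_ball
    (ae_restrict_of_ae_restrict_of_subset ball_subset (hhg i))

end MeanValue

section Norming

open Metric Set Filter Topology

/-- A family of functionals on `E` is `K`-norming if `‖x‖ ≤ K * sup i, ‖φ i x‖` for all `x`. Upper
bounds `C` stand in for the supremum, which has a junk value when it is infinite. -/
def IsNorming {ι 𝕜 E : Type*} [NontriviallyNormedField 𝕜] [NormedAddCommGroup E]
    [NormedSpace 𝕜 E] (K : ℝ) (φ : ι → StrongDual 𝕜 E) : Prop :=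
  ∀ (x : E) (C : ℝ), (∀ i, ‖φ i x‖ ≤ C) → ‖x‖ ≤ K * C

lemma isNorming_one_inclusionInDoubleDual {𝕜 E : Type*} [RCLike 𝕜] [NormedAddCommGroup E]
    [NormedSpace 𝕜 E] :
    IsNorming 1 fun y : closedBall (0 : E) 1 => NormedSpace.inclusionInDoubleDual 𝕜 E y := by
  intro ψ C hC
  rw [one_mul]
  refine ψ.opNorm_le_of_unit_norm ?_ fun y hy => hC ⟨y, by simp [hy]⟩
  exact (norm_nonneg _).trans (hC ⟨0, by simp⟩)

lemma wedgeIntegral_clm_comp {E F : Type*} [NormedAddCommGroup E] [NormedSpace ℂ E]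
    [CompleteSpace E] [NormedAddCommGroup F] [NormedSpace ℂ F] [CompleteSpace F] (φ : E →L[ℂ] F)
    {f : ℂ → E} {z w : ℂ} (hf : ContinuousOn f (Complex.Rectangle z w)) :
    Complex.wedgeIntegral z w (fun v => φ (f v)) = φ (Complex.wedgeIntegral z w f) := by
  have horizontal :
      IntervalIntegrable (fun x : ℝ => f (x + z.im * Complex.I)) volume z.re w.re :=
    (hf.comp (by fun_prop) fun x hx => by
      simpa [Complex.Rectangle, Complex.mem_reProdIm] using hx).intervalIntegrable
  have vertical :
      IntervalIntegrable (fun y : ℝ => f (w.re + y * Complex.I)) volume z.im w.im :=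
    (hf.comp (by fun_prop) fun y hy => by
      simpa [Complex.Rectangle, Complex.mem_reProdIm] using hy).intervalIntegrable
  simp only [Complex.wedgeIntegral, φ.intervalIntegral_comp_comm horizontal,
    φ.intervalIntegral_comp_comm vertical, map_add, map_smul]

variable {ι E : Type*} [NormedAddCommGroup E] [NormedSpace ℂ E] {φ : ι → StrongDual ℂ E} {K : ℝ}
  {f : ℂ → E}

lemma IsNorming.norm_sub_le (hφ : IsNorming K φ) {c z : ℂ} {r M : ℝ}
    (hdiff : ∀ i, DifferentiableOn ℂ (fun w => φ i (f w)) (ball c r))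
    (hbound : ∀ w ∈ ball c r, ∀ i, ‖φ i (f w)‖ ≤ M) (hz : z ∈ ball c r) :
    ‖f z - f c‖ ≤ K * (2 * M / r * dist z c) := by
  refine hφ _ _ fun i => ?_
  rw [map_sub, ← dist_eq_norm]
  refine Complex.dist_le_div_mul_dist_of_mapsTo_ball (hdiff i) (fun w hw => ?_) hz
  rw [mem_closedBall, two_mul]
  exact (dist_le_norm_add_norm _ _).trans
    (add_le_add (hbound w hw i) (hbound c (mem_ball_self (pos_of_mem_ball hz)) i))

variable {U : Set ℂ}

lemma IsNorming.continuousOn (hφ : IsNorming K φ) (hU : IsOpen U)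
    (hdiff : ∀ i, DifferentiableOn ℂ (fun w => φ i (f w)) U)
    (hbound : ∀ z ∈ U, ∃ M, ∀ᶠ w in 𝓝 z, ∀ i, ‖φ i (f w)‖ ≤ M) : ContinuousOn f U := by
  refine continuousOn_of_forall_continuousAt fun c hc => ?_
  obtain ⟨M, hM⟩ := hbound c hc
  obtain ⟨r, hr, hball⟩ := eventually_nhds_iff_ball.1 ((hU.eventually_mem hc).and hM)
  have lipschitz_bound : ∀ᶠ z in 𝓝 c, ‖f z - f c‖ ≤ K * (2 * M / r * dist z c) := by
    filter_upwards [ball_mem_nhds c hr] with z hz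
    exact hφ.norm_sub_le (fun i => (hdiff i).mono fun w hw => (hball w hw).1)
      (fun w hw => (hball w hw).2) hz
  refine tendsto_iff_norm_sub_tendsto_zero.2 (squeeze_zero' (.of_forall fun _ => norm_nonneg _)
    lipschitz_bound ?_)
  have : Continuous fun z => K * (2 * M / r * dist z c) := by fun_prop
  simpa using this.tendsto c

lemma IsNorming.differentiableOn [CompleteSpace E] (hφ : IsNorming K φ) (hU : IsOpen U)
    (hdiff : ∀ i, DifferentiableOn ℂ (fun w => φ i (f w)) U)
    (hbound : ∀ z ∈ U, ∃ M, ∀ᶠ w in 𝓝 z, ∀ i, ‖φ i (f w)‖ ≤ M) : DifferentiableOn ℂ f U := by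
  have hf : ContinuousOn f U := hφ.continuousOn hU hdiff hbound
  refine (Complex.isConservativeOn_and_continuousOn_iff_isDifferentiableOn hU).1
    ⟨fun z w hzw => ?_, hf⟩
  have rectangle_comm : Complex.Rectangle w z = Complex.Rectangle z w := by
    simp only [Complex.Rectangle, uIcc_comm]
  have functional_eq_zero (i : ι) :
      φ i (Complex.wedgeIntegral z w f + Complex.wedgeIntegral w z f) = 0 := by
    rw [map_add, ← wedgeIntegral_clm_comp _ (hf.mono hzw),
      ← wedgeIntegral_clm_comp _ (hf.mono (rectangle_comm ▸ hzw)), add_eq_zero_iff_eq_neg]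
    exact (hdiff i).isConservativeOn z w hzw
  rw [← add_eq_zero_iff_eq_neg, ← norm_le_zero_iff]
  simpa using hφ _ 0 fun i => (norm_eq_zero.2 (functional_eq_zero i)).le

end Norming

section ApproximateSolution

open Metric Filter Topology

lemma norm_le_two_mul_norm_map {𝕜 E F : Type*} [NormedField 𝕜] [NormedAddCommGroup E]
    [NormedSpace 𝕜 E] [NormedAddCommGroup F] [NormedSpace 𝕜 F] [CompleteSpace E] (T : E →L[𝕜] F)
    (hT : Function.Injective T)
    (happrox : ∀ x, T x ∈ closure (T '' closedBall 0 ‖T x‖)) (x : E) : ‖x‖ ≤ 2 * ‖T x‖ := by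
  have exists_halving (v : E) : ∃ v', ‖v - v'‖ ≤ ‖T v‖ ∧ ‖T v'‖ ≤ ‖T v‖ / 2 := by
    rcases eq_or_ne (T v) 0 with hv | hv
    · exact ⟨v, by simp [hv]⟩
    obtain ⟨_, ⟨u, hu, rfl⟩, huv⟩ :=
      Metric.mem_closure_iff.1 (happrox v) (‖T v‖ / 2) (half_pos (norm_pos_iff.2 hv))
    exact ⟨v - u, by simpa using hu, by simpa [dist_eq_norm] using huv.le⟩
  choose next hdist hhalf using exists_halving
  have norm_map_iterate (n : ℕ) : ‖T (next^[n] x)‖ ≤ ‖T x‖ / 2 ^ n := by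
    induction n with
    | zero => simp
    | succ n ih =>
      rw [Function.iterate_succ_apply', pow_succ, ← div_div]
      linarith [hhalf (next^[n] x)]
  have dist_iterate (n : ℕ) :
      dist (next^[n] x) (next^[n + 1] x) ≤ 2 * ‖T x‖ / 2 / 2 ^ n := by
    rw [Function.iterate_succ_apply', dist_eq_norm, mul_div_cancel_left₀ _ two_ne_zero]
    exact (hdist _).trans (norm_map_iterate n)
  obtain ⟨a, ha⟩ := cauchySeq_tendsto_of_complete (cauchySeq_of_le_geometric_two dist_iterate)
  have map_limit : T a = 0 := by
    have tendsto_bound : Tendsto (fun n : ℕ => ‖T x‖ / 2 ^ n) atTop (𝓝 0) :=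
      tendsto_const_nhds.div_atTop (tendsto_pow_atTop_atTop_of_one_lt one_lt_two)
    exact tendsto_nhds_unique ((T.continuous.tendsto a).comp ha)
      (squeeze_zero_norm norm_map_iterate tendsto_bound)
  have a_eq_zero : a = 0 := hT (by rw [map_limit, map_zero])
  simpa [a_eq_zero] using dist_le_of_le_geometric_two_of_tendsto₀ dist_iterate ha

variable {𝕜 E F : Type*} [RCLike 𝕜] [NormedAddCommGroup E] [NormedSpace 𝕜 E]
  [NormedAddCommGroup F] [NormedSpace 𝕜 F]

lemma norm_mul_le_of_forall_re_le {ψ : StrongDual 𝕜 E} {r u : ℝ} (hr : 0 ≤ r)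
    (hψ : ∀ x ∈ closedBall 0 r, RCLike.re (ψ x) ≤ u) : ‖ψ‖ * r ≤ u := by
  have norm_le_on_ball (x : E) (hx : x ∈ closedBall 0 r) : ‖ψ x‖ ≤ u := by
    obtain ⟨c, hc, hcx⟩ := RCLike.exists_norm_eq_mul_self (ψ x)
    have := hψ (c • x) (by simpa [norm_smul, hc] using hx)
    rwa [map_smul, smul_eq_mul, ← hcx, RCLike.ofReal_re] at this
  calc ‖ψ‖ * r = ‖(r : 𝕜) • ψ‖ := by rw [norm_smul, RCLike.norm_of_nonneg hr, mul_comm]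
    _ ≤ u := by
      refine ContinuousLinearMap.opNorm_le_of_unit_norm ?_ fun x hx => ?_
      · exact (norm_nonneg _).trans (norm_le_on_ball 0 (mem_closedBall_self hr))
      · rw [smul_apply, ← map_smul]
        exact norm_le_on_ball _ (by simp [norm_smul, hx, abs_of_nonneg hr])

lemma mem_closure_image_closedBall (T : E →L[𝕜] F) {y : F} {r : ℝ} (hr : 0 ≤ r)
    (hy : ∀ Φ : StrongDual 𝕜 F, ‖Φ y‖ ≤ ‖Φ ∘L T‖ * r) : y ∈ closure (T '' closedBall 0 r) := by
  let : NormedSpace ℝ E := .restrictScalars ℝ 𝕜 E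
  let : NormedSpace ℝ F := .restrictScalars ℝ 𝕜 F
  by_contra hmem
  have convex_image : Convex ℝ (T '' closedBall 0 r) :=
    (convex_closedBall 0 r).is_linear_image (T.restrictScalars ℝ).isLinear
  obtain ⟨Φ, u, hΦu, huy⟩ := RCLike.geometric_hahn_banach_closed_point (𝕜 := 𝕜)
    convex_image.closure isClosed_closure hmem
  have : ‖Φ ∘L T‖ * r ≤ u := norm_mul_le_of_forall_re_le hr fun x hx =>
    (hΦu (T x) (subset_closure (Set.mem_image_of_mem T hx))).le
  exact huy.not_ge ((RCLike.re_le_norm _).trans ((hy Φ).trans this))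

end ApproximateSolution

section RestrictedEvaluation

open Metric

-- Needed to find the norm on the dual of a subspace of `E'`.
set_option maxSynthPendingDepth 3

/-- The canonical map `E → Y'`, `x ↦ (y ↦ y x)`, for a space `Y ⊆ E'` of functionals. -/
noncomputable def evalOn {𝕜 E : Type*} [NontriviallyNormedField 𝕜] [NormedAddCommGroup E]
    [NormedSpace 𝕜 E] (Y : Submodule 𝕜 (StrongDual 𝕜 E)) : E →L[𝕜] StrongDual 𝕜 Y :=
  Y.subtypeL.flip

variable {𝕜 E : Type*} [RCLike 𝕜] [NormedAddCommGroup E] [NormedSpace 𝕜 E]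
  {Y : Submodule 𝕜 (StrongDual 𝕜 E)}

lemma evalOn_mem_closure_image_closedBall
    (hY : ∀ Φ : StrongDual 𝕜 (StrongDual 𝕜 Y), Φ ∘L evalOn Y ∈ Y) (x : E) :
    evalOn Y x ∈ closure (evalOn Y '' closedBall 0 ‖evalOn Y x‖) := by
  refine mem_closure_image_closedBall _ (norm_nonneg _) fun Φ => ?_
  -- Since `Φ ∘ evalOn Y` is itself some `y ∈ Y`, the scalar `Φ (evalOn Y x)` equals `evalOn Y x y`.
  rw [mul_comm]
  exact (evalOn Y x).le_opNorm ⟨Φ ∘L evalOn Y, hY Φ⟩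

lemma isNorming_two_of_comp_evalOn_mem [CompleteSpace E]
    (hsep : ∀ x : E, (∀ y ∈ Y, y x = 0) → x = 0)
    (hY : ∀ Φ : StrongDual 𝕜 (StrongDual 𝕜 Y), Φ ∘L evalOn Y ∈ Y) :
    IsNorming 2 fun y : closedBall (0 : Y) 1 => (y : StrongDual 𝕜 E) := by
  have evalOn_injective : Function.Injective (evalOn Y) :=
    (injective_iff_map_eq_zero _).2 fun x hx => hsep x fun y hy => DFunLike.congr_fun hx ⟨y, hy⟩
  intro x C hC
  calc ‖x‖ ≤ 2 * ‖evalOn Y x‖ :=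
        norm_le_two_mul_norm_map _ evalOn_injective (evalOn_mem_closure_image_closedBall hY) x
    _ ≤ 2 * C := by
      gcongr
      simpa using isNorming_one_inclusionInDoubleDual (evalOn Y x) C hC

end RestrictedEvaluation

section VeryWeaklyHolomorphic

open Metric Topology

set_option maxSynthPendingDepth 3

variable {E : Type*} [NormedAddCommGroup E] [NormedSpace ℂ E] {f : ℂ → E} {U : Set ℂ}

/-- The space of functionals `φ ∈ E'` for which `φ ∘ f` is holomorphic on `U`. -/
def holomorphicFunctionals (f : ℂ → E) (U : Set ℂ) : Submodule ℂ (StrongDual ℂ E) where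
  carrier := {φ | DifferentiableOn ℂ (fun z => φ (f z)) U}
  add_mem' hφ hψ := hφ.add hψ
  zero_mem' := differentiableOn_const 0
  smul_mem' c _ hφ := hφ.const_smul c

lemma comp_evalOn_mem_holomorphicFunctionals (hU : IsOpen U)
    (hbound : ∀ z ∈ U, ∃ M, ∀ᶠ w in 𝓝 z, ∀ y : closedBall (0 : holomorphicFunctionals f U) 1,
      ‖(y : StrongDual ℂ E) (f w)‖ ≤ M)
    (Φ : StrongDual ℂ (StrongDual ℂ (holomorphicFunctionals f U))) :
    Φ ∘L evalOn (holomorphicFunctionals f U) ∈ holomorphicFunctionals f U := by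
  have : DifferentiableOn ℂ (fun z => evalOn (holomorphicFunctionals f U) (f z)) U :=
    isNorming_one_inclusionInDoubleDual.differentiableOn hU (fun y => y.1.2) hbound
  exact Φ.differentiable.comp_differentiableOn this

lemma differentiableOn_of_separating_holomorphicFunctionals [CompleteSpace E] (hU : IsOpen U)
    {g : ℂ → ℝ} (hg : LocallyIntegrableOn g U) (hfg : ∀ᵐ z ∂volume.restrict U, ‖f z‖ ≤ g z)
    (hsep : ∀ x : E, (∀ φ ∈ holomorphicFunctionals f U, φ x = 0) → x = 0) :
    DifferentiableOn ℂ f U := by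
  have norm_le (y : closedBall (0 : holomorphicFunctionals f U) 1) :
      ∀ᵐ z ∂volume.restrict U, ‖(y : StrongDual ℂ E) (f z)‖ ≤ g z := by
    filter_upwards [hfg] with z hz
    have hy : ‖(y : StrongDual ℂ E)‖ ≤ 1 := mem_closedBall_zero_iff.1 y.2
    exact ((y : StrongDual ℂ E).le_of_opNorm_le hy _).trans (by rwa [one_mul])
  have hbound : ∀ z ∈ U, ∃ M, ∀ᶠ w in 𝓝 z, ∀ y : closedBall (0 : holomorphicFunctionals f U) 1,
      ‖(y : StrongDual ℂ E) (f w)‖ ≤ M := fun z hz =>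
    exists_eventually_forall_norm_le_of_ae_norm_le hU hg (fun y => y.1.2) norm_le hz
  exact (isNorming_two_of_comp_evalOn_mem hsep
    (comp_evalOn_mem_holomorphicFunctionals hU hbound)).differentiableOn hU (fun y => y.1.2) hbound

end VeryWeaklyHolomorphic

/-- A function `f : Ω → X` (Ω ⊆ ℂ open, X a complex Banach space) is
holomorphic iff it is locally `L¹`-bounded and very weakly holomorphic, i.e. there is a
separating set `W ⊆ X'` such that `x' ∘ f` is holomorphic for all `x' ∈ W`. -/
theorem very_weakly_holomorphic_iff {X : Type*} [NormedAddCommGroup X] [NormedSpace ℂ X]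
    [CompleteSpace X] {Ω : Set ℂ} (hΩ : IsOpen Ω) (f : ℂ → X) :
    (∀ z ∈ Ω, DifferentiableAt ℂ f z) ↔
      ((∃ g : ℂ → ℝ, LocallyIntegrableOn g Ω ∧
          ∀ᵐ ξ ∂(volume.restrict Ω), ‖f ξ‖ ≤ g ξ) ∧
        ∃ W : Set (X →L[ℂ] ℂ),
          (∀ x : X, (∀ x' ∈ W, x' x = 0) → x = 0) ∧
          ∀ x' ∈ W, ∀ z ∈ Ω, DifferentiableAt ℂ (fun w => x' (f w)) z) := by
  constructor
  · intro hf
    refine ⟨⟨fun z => ‖f z‖, ?_, .of_forall fun _ => le_rfl⟩, Set.univ, ?_, ?_⟩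
    · have : ContinuousOn f Ω := fun z hz => (hf z hz).continuousAt.continuousWithinAt
      exact this.norm.locallyIntegrableOn hΩ.measurableSet
    · exact fun x hx =>
        SeparatingDual.eq_zero_of_forall_dual_eq_zero (R := ℂ) fun x' => hx x' trivial
    · exact fun x' _ z hz => x'.differentiableAt.comp z (hf z hz)
  · rintro ⟨⟨g, hg, hfg⟩, W, hW, hWf⟩ z hz
    have W_subset : W ⊆ holomorphicFunctionals f Ω := fun x' hx' w hw =>
      (hWf x' hx' w hw).differentiableWithinAt
    have hf : DifferentiableOn ℂ f Ω :=
      differentiableOn_of_separating_holomorphicFunctionals hΩ hg hfg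
        fun x hx => hW x fun x' hx' => hx x' (W_subset hx')
    exact hf.differentiableAt (hΩ.mem_nhds hz)
end

section
/- (Vector-valued Weyl lemma) Let Ω ⊆ ℝ^d be open, let X be a Banach space, and let f ∈ L¹_loc(Ω, X) satisfy Δf = 0 in the sense of distributions, i.e. ∫_Ω f(ξ) Δφ(ξ) dξ = 0 for every φ ∈ C_c^∞(Ω, ℝ). Then f has a harmonic representative: there exists f* ∈ C^∞(Ω, X) with Δf* = 0 on Ω and f = f* almost everywhere on Ω. -/
open MeasureTheory

/-- The `i`-th standard basis vector of `ℝ^d`. -/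
noncomputable def stdBasis {d : ℕ} (i : Fin d) : EuclideanSpace ℝ (Fin d) :=
  EuclideanSpace.single i (1 : ℝ)

/-- The Laplacian `Δu(x) = Σᵢ DᵢDᵢ u (x)` of a function `u : ℝ^d → X`. -/
noncomputable def lap {d : ℕ} {X : Type*} [NormedAddCommGroup X] [NormedSpace ℝ X]
    (u : EuclideanSpace ℝ (Fin d) → X) (x : EuclideanSpace ℝ (Fin d)) : X :=
  ∑ i : Fin d, fderiv ℝ (fun y => fderiv ℝ u y (stdBasis i)) x (stdBasis i)

/-!
Let `ρ` be a radial mollifier and `ρ_a(y) = a ^ d ρ(a y)`. Because `ρ` is radial, the vector field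
`y ρ(y)` is the gradient of a compactly supported function `ψ`, whence
`d/da ρ_a = a⁻¹ (div (y ρ(y)))_a = a⁻¹ (Δψ)_a = a⁻³ Δ(ψ_a)`. If `Δf = 0` in the sense of
distributions, then `(f ⋆ ρ_a)(x)` therefore does not depend on `a` as long as the ball of radius
`1 / a` around `x` stays inside `Ω`. So, locally, the smooth harmonic function `f ⋆ ρ_a` for one
fixed `a` coincides with the limit as `a → ∞`, which is `f` almost everywhere by Lebesgue
differentiation. Two such local representatives are continuous and agree almost everywhere where
both are defined, hence they agree there and glue.
-/

open ContinuousLinearMap (lsmul)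
open Filter InnerProductSpace Laplacian Metric Module Set
open scoped ContDiff Convolution RealInnerProductSpace Topology

section LaplacianLemmas

variable {E X : Type*} [NormedAddCommGroup E] [InnerProductSpace ℝ E]
  [NormedAddCommGroup X] [NormedSpace ℝ X]

lemma hasFDerivAt_comp_norm_sq {G : ℝ → X} {x : E} (hG : DifferentiableAt ℝ G (‖x‖ ^ 2)) :
    HasFDerivAt (fun y => G (‖y‖ ^ 2))
      ((2 • innerSL ℝ x).smulRight (deriv G (‖x‖ ^ 2))) x :=
  (hG.hasDerivAt.hasFDerivAt.comp x (hasStrictFDerivAt_norm_sq x).hasFDerivAt).congr_fderiv <| by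
    ext v; simp [two_smul, add_smul]

variable [FiniteDimensional ℝ E] {u : E → X}

lemma laplacian_eq_sum_fderiv_fderiv {ι : Type*} [Fintype ι] (b : OrthonormalBasis ι ℝ E) {x : E}
    (hu : ContDiffAt ℝ 2 u x) :
    Δ u x = ∑ i, fderiv ℝ (fun y => fderiv ℝ u y (b i)) x (b i) := by
  have hdiff : DifferentiableAt ℝ (fderiv ℝ u) x :=
    (hu.fderiv_right (m := 1) (by norm_num)).differentiableAt one_ne_zero
  simp [laplacian_eq_iteratedFDeriv_orthonormalBasis u b, iteratedFDeriv_two_apply,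
    fderiv_clm_apply hdiff (differentiableAt_const _)]

lemma lap_eq_laplacian {d : ℕ} {u : EuclideanSpace ℝ (Fin d) → X} {x : EuclideanSpace ℝ (Fin d)}
    (hu : ContDiffAt ℝ 2 u x) : lap u x = Δ u x := by
  simp [lap, stdBasis, laplacian_eq_sum_fderiv_fderiv (EuclideanSpace.basisFun (Fin d) ℝ) hu]

lemma laplacian_comp_const_smul (hu : ContDiff ℝ 2 u) (c : ℝ) (x : E) :
    Δ (fun y => u (c • y)) x = c ^ 2 • Δ u (c • x) := by
  simp [laplacian_eq_iteratedFDeriv_stdOrthonormalBasis, iteratedFDeriv_comp_const_smul c hu,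
    Finset.smul_sum]

lemma laplacian_comp_const_sub (hu : ContDiff ℝ 2 u) (c x : E) :
    Δ (fun y => u (c - y)) x = Δ u (c - x) := by
  have hshift (y : E) : Δ (fun z => u (c + z)) y = Δ u (c + y) := by
    simp [laplacian_eq_iteratedFDeriv_stdOrthonormalBasis, iteratedFDeriv_comp_add_left]
  simpa [hshift, sub_eq_add_neg] using
    laplacian_comp_const_smul (u := fun z => u (c + z)) (by fun_prop) (-1) x

lemma tsupport_laplacian_subset : tsupport (Δ u) ⊆ tsupport u := by
  refine closure_minimal (fun x hx => ?_) (isClosed_tsupport u)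
  contrapose! hx
  rw [Function.mem_support, not_not,
    (laplacian_congr_nhds (notMem_tsupport_iff_eventuallyEq.1 hx)).eq_of_nhds]
  exact congrFun laplacian_const x

lemma laplacian_comp_norm_sq {G : ℝ → X} (hG : ContDiff ℝ 2 G) (x : E) :
    Δ (fun y : E => G (‖y‖ ^ 2)) x =
      (2 * finrank ℝ E : ℝ) • deriv G (‖x‖ ^ 2) +
        (4 * ‖x‖ ^ 2) • deriv (deriv G) (‖x‖ ^ 2) := by
  have hG' : Differentiable ℝ (deriv G) :=
    (contDiff_succ_iff_deriv.1 hG).2.2.differentiable one_ne_zero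
  have hfirst (v : E) : (fun y => fderiv ℝ (fun z : E => G (‖z‖ ^ 2)) y v) =
      fun y => (2 * ⟪v, y⟫) • deriv G (‖y‖ ^ 2) := by
    ext y
    simp [(hasFDerivAt_comp_norm_sq (hG.differentiable two_ne_zero _)).fderiv, real_inner_comm]
  have hsecond (v : E) : fderiv ℝ (fun y => fderiv ℝ (fun z : E => G (‖z‖ ^ 2)) y v) x v =
      (2 * ‖v‖ ^ 2) • deriv G (‖x‖ ^ 2) + (4 * ⟪v, x⟫ ^ 2) • deriv (deriv G) (‖x‖ ^ 2) := by
    have hinner : HasFDerivAt (fun y => 2 * ⟪v, y⟫) ((2 : ℝ) • innerSL ℝ v) x :=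
      (innerSL ℝ v).hasFDerivAt.const_mul 2
    rw [hfirst, (hinner.fun_smul (hasFDerivAt_comp_norm_sq (hG' _))).fderiv]
    simp only [add_apply, smul_apply, ContinuousLinearMap.smulRight_apply, coe_innerSL_apply,
      real_inner_comm v x, real_inner_self_eq_norm_sq, nsmul_eq_mul, Nat.cast_ofNat, smul_eq_mul]
    module
  have hparseval : ∑ i, ⟪stdOrthonormalBasis ℝ E i, x⟫ ^ 2 = ‖x‖ ^ 2 := by
    simp [← (stdOrthonormalBasis ℝ E).sum_sq_norm_inner_right x]
  rw [laplacian_eq_sum_fderiv_fderiv (stdOrthonormalBasis ℝ E)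
    (show ContDiff ℝ 2 fun y : E => G (‖y‖ ^ 2) from hG.comp (contDiff_norm_sq ℝ)).contDiffAt]
  simp only [hsecond, Finset.sum_add_distrib, ← Finset.sum_smul, ← Finset.mul_sum, hparseval]
  simp [mul_comm]

end LaplacianLemmas

section Convolution

variable {E X Y Z : Type*} [NormedAddCommGroup E] [NormedSpace ℝ E] [MeasurableSpace E]
  [BorelSpace E] [NormedAddCommGroup X] [NormedSpace ℝ X] [NormedAddCommGroup Y] [NormedSpace ℝ Y]
  [NormedAddCommGroup Z] [NormedSpace ℝ Z] {μ : Measure E}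
  (L : X →L[ℝ] Y →L[ℝ] Z) {f : E → X} {g : E → Y}

lemma hasDerivAt_convolution_right_with_param {g : ℝ → E → Y} {s : Set ℝ} {k : Set E}
    (hs : IsOpen s) (hk : IsCompact k) (hgs : ∀ p x, p ∈ s → x ∉ k → g p x = 0)
    (hf : LocallyIntegrable f μ) (hg : ContDiffOn ℝ 1 ↿g (s ×ˢ univ)) {p : ℝ} (hp : p ∈ s)
    (x : E) :
    HasDerivAt (fun q => (f ⋆[L, μ] g q) x)
      ((f ⋆[L, μ] fun y => deriv (fun q => g q y) p) x) p := by
  have hnhds (y : E) : s ×ˢ univ ∈ 𝓝 (p, y) := (hs.prod isOpen_univ).mem_nhds ⟨hp, mem_univ y⟩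
  have hcont : Continuous fun y => fderiv ℝ ↿g (p, y) := continuous_iff_continuousAt.2 fun y =>
    ((hg.contDiffAt (hnhds y)).continuousAt_fderiv one_ne_zero).comp (by fun_prop)
  have hsupp : HasCompactSupport fun y => fderiv ℝ ↿g (p, y) := by
    refine HasCompactSupport.intro hk fun y hy => ?_
    have hzero : ↿g =ᶠ[𝓝 (p, y)] 0 := by
      filter_upwards [(hs.prod hk.isClosed.isOpen_compl).mem_nhds ⟨hp, hy⟩] with q hq
      exact hgs q.1 q.2 hq.1 hq.2
    rw [hzero.fderiv_eq, fderiv_zero, Pi.zero_apply]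
  have hpartial (y : E) : fderiv ℝ ↿g (p, y) (1, 0) = deriv (fun q => g q y) p := by
    have hline : HasDerivAt (fun q : ℝ => (q, y)) (1, 0) p :=
      (hasDerivAt_id p).prodMk (hasDerivAt_const p y)
    exact (((hg.contDiffAt (hnhds y)).differentiableAt one_ne_zero).hasFDerivAt.comp_hasDerivAt p
      hline).deriv.symm
  have hline : HasDerivAt (fun q : ℝ => (q, x)) (1, 0) p :=
    (hasDerivAt_id p).prodMk (hasDerivAt_const p x)
  have := (hasFDerivAt_convolution_right_with_param L hs hk hgs hf hg (p, x) hp).comp_hasDerivAt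
    p hline
  rw [convolution_precompR_apply L hf hsupp hcont] at this
  simpa only [hpartial, Function.comp_def] using this

variable [SFinite μ] [μ.IsAddLeftInvariant]

lemma fderiv_convolution_right_apply (hf : LocallyIntegrable f μ) (hg : ContDiff ℝ 1 g)
    (hgc : HasCompactSupport g) (x v : E) :
    fderiv ℝ (f ⋆[L, μ] g) x v = (f ⋆[L, μ] fun y => fderiv ℝ g y v) x := by
  rw [(hgc.hasFDerivAt_convolution_right L hf hg x).fderiv]
  exact convolution_precompR_apply L hf (hgc.fderiv ℝ) (hg.continuous_fderiv one_ne_zero) x v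

end Convolution

section LaplacianConvolution

variable {E X Y Z : Type*} [NormedAddCommGroup E] [InnerProductSpace ℝ E] [FiniteDimensional ℝ E]
  [MeasurableSpace E] [BorelSpace E] [NormedAddCommGroup X] [NormedSpace ℝ X]
  [NormedAddCommGroup Y] [NormedSpace ℝ Y] [NormedAddCommGroup Z] [NormedSpace ℝ Z]
  {μ : Measure E} [SFinite μ] [μ.IsAddLeftInvariant]

lemma laplacian_convolution_right (L : X →L[ℝ] Y →L[ℝ] Z) {f : E → X} {g : E → Y}
    (hf : LocallyIntegrable f μ) (hg : ContDiff ℝ 2 g) (hgc : HasCompactSupport g) (x : E) :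
    Δ (f ⋆[L, μ] g) x = (f ⋆[L, μ] Δ g) x := by
  let b := stdOrthonormalBasis ℝ E
  have hg' (v : E) : ContDiff ℝ 1 fun y => fderiv ℝ g y v :=
    (hg.fderiv_right (m := 1) (by norm_num)).clm_apply contDiff_const
  have hgc' (v : E) : HasCompactSupport fun y => fderiv ℝ g y v := hgc.fderiv_apply ℝ v
  have hint (v : E) : Integrable
      (fun t => L (f t) (fderiv ℝ (fun y => fderiv ℝ g y v) (x - t) v)) μ :=
    ((hgc' v).fderiv_apply ℝ v).convolutionExists_right L hf
      (((hg' v).continuous_fderiv one_ne_zero).clm_apply continuous_const) x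
  have hconv : ContDiff ℝ 2 (f ⋆[L, μ] g) := hgc.contDiff_convolution_right (n := 2) L hf hg
  calc Δ (f ⋆[L, μ] g) x
      = ∑ i, (f ⋆[L, μ] fun y => fderiv ℝ (fun z => fderiv ℝ g z (b i)) y (b i)) x := by
        rw [laplacian_eq_sum_fderiv_fderiv b hconv.contDiffAt]
        simp only [fderiv_convolution_right_apply L hf (hg.of_le one_le_two) hgc,
          fderiv_convolution_right_apply L hf (hg' _) (hgc' _)]
    _ = (f ⋆[L, μ] Δ g) x := by
        simp only [convolution_def, laplacian_eq_sum_fderiv_fderiv b hg.contDiffAt, map_sum]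
        exact (integral_finsetSum _ fun i _ => hint (b i)).symm

end LaplacianConvolution

section Dilation

variable {E : Type*} [NormedAddCommGroup E]

/-- The dilation `y ↦ a ^ d * ρ (a • y)` of a kernel `ρ` on a `d`-dimensional space, which for
`0 < a` preserves the integral. Here `a` is the reciprocal of the usual mollification radius: the
dilations concentrate at the origin as `a → ∞`. -/
noncomputable def dilate [NormedSpace ℝ E] (ρ : E → ℝ) (a : ℝ) (y : E) : ℝ :=
  a ^ finrank ℝ E * ρ (a • y)

section NormedSpace

variable [NormedSpace ℝ E] {ρ : E → ℝ} {a : ℝ}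

lemma contDiff_uncurry_dilate {n : WithTop ℕ∞} (hρ : ContDiff ℝ n ρ) :
    ContDiff ℝ n ↿(dilate ρ) :=
  (contDiff_fst.pow _).mul (hρ.comp (contDiff_fst.smul contDiff_snd))

lemma contDiff_dilate {n : WithTop ℕ∞} (hρ : ContDiff ℝ n ρ) : ContDiff ℝ n (dilate ρ a) :=
  (contDiff_uncurry_dilate hρ).comp (contDiff_prodMk_right a)

lemma tsupport_dilate_subset (hρ : tsupport ρ ⊆ closedBall 0 1) (ha : 0 < a) :
    tsupport (dilate ρ a) ⊆ closedBall 0 a⁻¹ := by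
  refine closure_minimal (fun y hy => ?_) isClosed_closedBall
  have : a • y ∈ closedBall (0 : E) 1 := hρ (subset_tsupport _ (right_ne_zero_of_mul hy))
  rw [mem_closedBall_zero_iff, norm_smul, Real.norm_of_nonneg ha.le] at this
  rwa [mem_closedBall_zero_iff, inv_eq_one_div, le_div_iff₀' ha]

lemma deriv_dilate (hρ : Differentiable ℝ ρ) (ha : a ≠ 0) (y : E) :
    deriv (fun a => dilate ρ a y) a =
      a⁻¹ * dilate (fun z => finrank ℝ E * ρ z + fderiv ℝ ρ z z) a y := by
  have hcomp : HasDerivAt (fun a => ρ (a • y)) (fderiv ℝ ρ (a • y) y) a := by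
    simpa [Function.comp_def] using
      (hρ (a • y)).hasFDerivAt.comp_hasDerivAt a ((hasDerivAt_id a).smul_const y)
  have hpow :
      (finrank ℝ E : ℝ) * a ^ (finrank ℝ E - 1) = a⁻¹ * (finrank ℝ E * a ^ finrank ℝ E) := by
    rcases finrank ℝ E with _ | n
    · simp
    · simp [pow_succ, field]
  have hderiv := ((hasDerivAt_pow (finrank ℝ E) a).mul hcomp).deriv
  simp only [dilate]
  refine hderiv.trans ?_
  rw [hpow, map_smul, smul_eq_mul]
  field_simp

variable [FiniteDimensional ℝ E]

lemma hasCompactSupport_dilate (hρ : tsupport ρ ⊆ closedBall 0 1) (ha : 0 < a) :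
    HasCompactSupport (dilate ρ a) :=
  (isCompact_closedBall 0 a⁻¹).of_isClosed_subset (isClosed_tsupport _)
    (tsupport_dilate_subset hρ ha)

variable [MeasurableSpace E] [BorelSpace E] {μ : Measure E} [μ.IsAddHaarMeasure]

lemma integral_dilate (ρ : E → ℝ) (ha : 0 < a) : ∫ y, dilate ρ a y ∂μ = ∫ y, ρ y ∂μ := by
  simp only [dilate, integral_const_mul]
  rw [Measure.integral_comp_smul_of_nonneg μ ρ a (hR := ha.le), smul_eq_mul,
    mul_inv_cancel_left₀ (by positivity)]

-- The kernels are dominated by multiples of normalised indicators of balls, so that Lebesgue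
-- differentiation applies.
lemma ae_tendsto_convolution_dilate {X : Type*} [NormedAddCommGroup X] [NormedSpace ℝ X]
    [CompleteSpace X] {f : E → X} (hf : LocallyIntegrable f μ) (hρ : Continuous ρ)
    (hsupp : tsupport ρ ⊆ closedBall 0 1) (hint : ∫ y, ρ y ∂μ = 1) :
    ∀ᵐ x ∂μ, Tendsto (fun a => (f ⋆[(lsmul ℝ ℝ).flip, μ] dilate ρ a) x) atTop (𝓝 (f x)) := by
  obtain ⟨C, hC⟩ := hρ.bounded_above_of_compact_support
    ((isCompact_closedBall 0 1).of_isClosed_subset (isClosed_tsupport ρ) hsupp)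
  filter_upwards [(Besicovitch.vitaliFamily μ).ae_tendsto_average_norm_sub hf] with x hx
  have hballs : Tendsto (fun a : ℝ => ⨍ y in closedBall x a⁻¹, ‖f y - f x‖ ∂μ) atTop (𝓝 0) :=
    (hx.comp (Besicovitch.tendsto_filterAt μ x)).comp tendsto_inv_atTop_nhdsGT_zero
  refine tendsto_integral_smul_of_tendsto_average_norm_sub (g := fun a t => dilate ρ a (x - t))
    (C * μ.real (ball 0 1)) hballs ?_ ?_ ?_ ?_
  · exact .of_forall fun a => hf.integrableOn_isCompact (isCompact_closedBall _ _)
  · refine tendsto_const_nhds.congr' ?_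
    filter_upwards [eventually_gt_atTop 0] with a ha
    rw [integral_sub_left_eq_self, integral_dilate ρ ha, hint]
  · filter_upwards [eventually_gt_atTop 0] with a ha t ht
    simpa [dist_eq_norm, norm_sub_rev] using tsupport_dilate_subset hsupp ha (subset_tsupport _ ht)
  · filter_upwards [eventually_gt_atTop 0] with a ha t
    have hball : 0 < μ.real (ball (0 : E) 1) := 
      ENNReal.toReal_pos (measure_ball_pos μ _ one_pos).ne' measure_ball_lt_top.ne
    calc |dilate ρ a (x - t)| = a ^ finrank ℝ E * |ρ (a • (x - t))| := by
          rw [dilate, abs_mul, abs_of_pos (by positivity)]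
      _ ≤ a ^ finrank ℝ E * C := by gcongr; exact hC _
      _ = C * μ.real (ball 0 1) / μ.real (closedBall x a⁻¹) := by
          rw [Measure.addHaar_real_closedBall μ x (by positivity), inv_pow]
          field_simp

end NormedSpace

lemma laplacian_dilate [InnerProductSpace ℝ E] [FiniteDimensional ℝ E] {ψ : E → ℝ}
    (hψ : ContDiff ℝ 2 ψ) (a : ℝ) (y : E) :
    Δ (dilate ψ a) y = a ^ 2 * dilate (Δ ψ) a y := by
  have hcomp : ContDiff ℝ 2 fun z => ψ (a • z) := by fun_prop
  have := laplacian_smul (a ^ finrank ℝ E) (hcomp.contDiffAt (x := y))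
  rw [laplacian_comp_const_smul hψ, smul_eq_mul, smul_eq_mul] at this
  exact this.trans (mul_left_comm ..)

end Dilation

section Mollifier

variable {E : Type*} [NormedAddCommGroup E]

lemma tsupport_comp_norm_sq_subset {X : Type*} [Zero X] {G : ℝ → X} (hG : ∀ s, 1 ≤ s → G s = 0) :
    tsupport (fun y : E => G (‖y‖ ^ 2)) ⊆ closedBall 0 1 := by
  refine closure_minimal (fun y hy => ?_) isClosed_closedBall
  contrapose! hy
  rw [mem_closedBall_zero_iff, not_le] at hy
  simpa using hG _ (one_le_pow₀ hy.le)

/-- The profile of the potential in `exists_isMollifierWithPotential`: a smooth function vanishing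
on `[1, ∞)`, with nonnegative derivative, which is evaluated at `s = ‖y‖ ^ 2`. -/
noncomputable def radialProfile (s : ℝ) : ℝ := -expNegInvGlue (1 - s)

lemma contDiff_radialProfile {n : ℕ∞} : ContDiff ℝ n radialProfile :=
  (expNegInvGlue.contDiff.comp (contDiff_const.sub contDiff_id)).neg

lemma contDiff_deriv_radialProfile {n : ℕ∞} : ContDiff ℝ n (deriv radialProfile) :=
  ((contDiff_infty_iff_deriv.1 contDiff_radialProfile).2).of_le (mod_cast le_top)

lemma radialProfile_of_one_le {s : ℝ} (hs : 1 ≤ s) : radialProfile s = 0 := by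
  rw [radialProfile, expNegInvGlue.zero_of_nonpos (sub_nonpos.2 hs), neg_zero]

lemma deriv_radialProfile (s : ℝ) :
    deriv radialProfile s = ((1 - s)⁻¹) ^ 2 * expNegInvGlue (1 - s) := by
  have hglue : HasDerivAt expNegInvGlue (((1 - s)⁻¹) ^ 2 * expNegInvGlue (1 - s)) (1 - s) := by
    simpa using expNegInvGlue.hasDerivAt_polynomial_eval_inv_mul 1 (1 - s)
  exact (hglue.comp_const_sub 1 s).fun_neg.deriv.trans (neg_neg _)

lemma deriv_radialProfile_of_one_le {s : ℝ} (hs : 1 ≤ s) : deriv radialProfile s = 0 := by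
  rw [deriv_radialProfile, expNegInvGlue.zero_of_nonpos (sub_nonpos.2 hs), mul_zero]

variable [InnerProductSpace ℝ E] [FiniteDimensional ℝ E] [MeasurableSpace E] {μ : Measure E}

lemma integral_deriv_radialProfile_pos [BorelSpace E] [μ.IsAddHaarMeasure] :
    0 < ∫ y : E, deriv radialProfile (‖y‖ ^ 2) ∂μ := by
  have hcont : Continuous fun y : E => deriv radialProfile (‖y‖ ^ 2) :=
    (contDiff_deriv_radialProfile (n := 0)).continuous.comp (by fun_prop)
  have hsupp : HasCompactSupport fun y : E => deriv radialProfile (‖y‖ ^ 2) :=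
    (isCompact_closedBall 0 1).of_isClosed_subset (isClosed_tsupport _)
      (tsupport_comp_norm_sq_subset fun _ => deriv_radialProfile_of_one_le)
  refine hcont.integral_pos_of_hasCompactSupport_nonneg_nonzero (x := 0) hsupp (fun y => ?_) ?_
  · rw [Pi.zero_apply, deriv_radialProfile]
    exact mul_nonneg (sq_nonneg _) (expNegInvGlue.nonneg _)
  · simp [deriv_radialProfile, (expNegInvGlue.pos_of_pos one_pos).ne']

/-- A mollifier `ρ` supported in the unit ball together with a potential `ψ` of the vector field
`y ρ(y)`, also supported there. Instead of `∇ψ = y ρ(y)` only its divergence `Δψ = div(y ρ(y))` is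
recorded; this makes the derivative of `dilate ρ a` in `a` a Laplacian. -/
structure IsMollifierWithPotential (μ : Measure E) (ρ ψ : E → ℝ) : Prop where
  contDiff : ContDiff ℝ ∞ ρ
  contDiff_potential : ContDiff ℝ ∞ ψ
  tsupport_subset : tsupport ρ ⊆ closedBall 0 1
  tsupport_potential_subset : tsupport ψ ⊆ closedBall 0 1
  integral_eq_one : ∫ y, ρ y ∂μ = 1
  laplacian_potential : ∀ y, Δ ψ y = finrank ℝ E * ρ y + fderiv ℝ ρ y y

variable (μ) in
lemma exists_isMollifierWithPotential [BorelSpace E] [μ.IsAddHaarMeasure] :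
    ∃ ρ ψ : E → ℝ, IsMollifierWithPotential μ ρ ψ := by
  let c := ∫ y : E, deriv radialProfile (‖y‖ ^ 2) ∂μ
  have hc : c ≠ 0 := integral_deriv_radialProfile_pos.ne'
  refine ⟨fun y => c⁻¹ * deriv radialProfile (‖y‖ ^ 2),
    fun y => (2 * c)⁻¹ * radialProfile (‖y‖ ^ 2),
    contDiff_const.mul (contDiff_deriv_radialProfile.comp (contDiff_norm_sq ℝ)),
    contDiff_const.mul (contDiff_radialProfile.comp (contDiff_norm_sq ℝ)),
    tsupport_comp_norm_sq_subset (G := fun s => c⁻¹ * deriv radialProfile s) fun s hs => by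
      rw [deriv_radialProfile_of_one_le hs, mul_zero],
    tsupport_comp_norm_sq_subset (G := fun s => (2 * c)⁻¹ * radialProfile s) fun s hs => by
      rw [radialProfile_of_one_le hs, mul_zero],
    by rw [integral_const_mul, inv_mul_cancel₀ hc], fun y => ?_⟩
  have hρ := (hasFDerivAt_comp_norm_sq (x := y)
    (contDiff_deriv_radialProfile.differentiable one_ne_zero _)).const_mul c⁻¹
  have hψ := laplacian_comp_norm_sq (E := E)
    (G := fun s => (2 * c)⁻¹ * radialProfile s) (contDiff_const.mul contDiff_radialProfile) y
  simp only [deriv_const_mul_field'] at hψ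
  rw [hψ, hρ.fderiv]
  simp only [smul_eq_mul, smul_apply, ContinuousLinearMap.smulRight_apply,
    coe_innerSL_apply, real_inner_self_eq_norm_sq, nsmul_eq_mul, Nat.cast_ofNat]
  field_simp
  ring

variable {ρ ψ : E → ℝ}

lemma IsMollifierWithPotential.deriv_dilate (h : IsMollifierWithPotential μ ρ ψ) {a : ℝ}
    (ha : a ≠ 0) (y : E) :
    deriv (fun b => dilate ρ b y) a = (a⁻¹) ^ 3 * Δ (dilate ψ a) y := by
  rw [_root_.deriv_dilate (h.contDiff.differentiable (by simp)) ha,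
    laplacian_dilate (contDiff_infty.1 h.contDiff_potential 2),
    ← funext h.laplacian_potential]
  field_simp

end Mollifier

section WeaklyHarmonic

variable {E X : Type*} [NormedAddCommGroup E] [InnerProductSpace ℝ E] [FiniteDimensional ℝ E]
  [MeasurableSpace E] [NormedAddCommGroup X] [NormedSpace ℝ X] {μ : Measure E}
  {f : E → X} {Ω K : Set E}

/-- The equation `Δf = 0` on `Ω` in the sense of distributions. The integral may be taken over the
whole space because `Δφ` vanishes off `Ω`. -/
def IsWeaklyHarmonicOn (μ : Measure E) (f : E → X) (Ω : Set E) : Prop :=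
  ∀ φ : E → ℝ, ContDiff ℝ ∞ φ → HasCompactSupport φ → tsupport φ ⊆ Ω →
    ∫ ξ, Δ φ ξ • f ξ ∂μ = 0

lemma IsWeaklyHarmonicOn.indicator (h : IsWeaklyHarmonicOn μ f Ω) (hK : K ⊆ Ω) :
    IsWeaklyHarmonicOn μ (K.indicator f) K := by
  intro φ hφ hφc hφK
  rw [← h φ hφ hφc (hφK.trans hK)]
  congr with ξ
  by_cases hξ : ξ ∈ K
  · rw [indicator_of_mem hξ]
  · rw [image_eq_zero_of_notMem_tsupport fun hξφ => hξ (hφK (tsupport_laplacian_subset hξφ)),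
      zero_smul, zero_smul]

lemma IsWeaklyHarmonicOn.convolution_laplacian_eq_zero (h : IsWeaklyHarmonicOn μ f Ω) {φ : E → ℝ}
    (hφ : ContDiff ℝ ∞ φ) (hφc : HasCompactSupport φ) {x : E}
    (hφΩ : ∀ y ∈ tsupport φ, x - y ∈ Ω) :
    (f ⋆[(lsmul ℝ ℝ).flip, μ] Δ φ) x = 0 := by
  have hsupp : tsupport (fun ξ => φ (x - ξ)) = (fun ξ => x - ξ) ⁻¹' tsupport φ :=
    tsupport_comp_eq_preimage φ (Homeomorph.subLeft x)
  have := h (fun ξ => φ (x - ξ)) (by fun_prop) (hφc.comp_homeomorph (Homeomorph.subLeft x))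
    (hsupp ▸ fun ξ hξ => by simpa using hφΩ _ hξ)
  simpa [convolution_def, laplacian_comp_const_sub (contDiff_infty.1 hφ 2)] using this

variable {a : ℝ} {x : E}

lemma IsWeaklyHarmonicOn.convolution_laplacian_dilate_eq_zero (h : IsWeaklyHarmonicOn μ f Ω)
    {φ : E → ℝ} (hφ : ContDiff ℝ ∞ φ) (hsupp : tsupport φ ⊆ closedBall 0 1) (ha : 0 < a)
    (hx : closedBall x a⁻¹ ⊆ Ω) :
    (f ⋆[(lsmul ℝ ℝ).flip, μ] Δ (dilate φ a)) x = 0 :=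
  h.convolution_laplacian_eq_zero (contDiff_dilate hφ) (hasCompactSupport_dilate hsupp ha)
    fun y hy => hx <| by simpa using tsupport_dilate_subset hsupp ha hy

variable [BorelSpace E] {ρ ψ : E → ℝ}

lemma IsWeaklyHarmonicOn.hasDerivAt_convolution_dilate (h : IsWeaklyHarmonicOn μ f Ω)
    (hf : LocallyIntegrable f μ) (hρ : IsMollifierWithPotential μ ρ ψ) (ha : 0 < a)
    (hx : closedBall x a⁻¹ ⊆ Ω) :
    HasDerivAt (fun b => (f ⋆[(lsmul ℝ ℝ).flip, μ] dilate ρ b) x) 0 a := by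
  have hsmall (b : ℝ) (y : E) (hb : b ∈ Ioi (a / 2)) (hy : y ∉ closedBall 0 (a / 2)⁻¹) :
      dilate ρ b y = 0 := by
    refine image_eq_zero_of_notMem_tsupport fun hyb => hy ?_
    exact closedBall_subset_closedBall (inv_anti₀ (half_pos ha) hb.le)
      (tsupport_dilate_subset hρ.tsupport_subset ((half_pos ha).trans hb) hyb)
  convert hasDerivAt_convolution_right_with_param (lsmul ℝ ℝ).flip isOpen_Ioi
    (isCompact_closedBall 0 (a / 2)⁻¹) hsmall hf
    (contDiff_uncurry_dilate (hρ.contDiff.of_le (mod_cast le_top))).contDiffOn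
    (half_lt_self ha) x using 1
  have := h.convolution_laplacian_dilate_eq_zero hρ.contDiff_potential
    hρ.tsupport_potential_subset ha hx
  simp only [funext (hρ.deriv_dilate ha.ne')]
  simp only [convolution_def, ContinuousLinearMap.flip_apply, ContinuousLinearMap.lsmul_apply,
    mul_smul, integral_smul] at this ⊢
  rw [this, smul_zero]

lemma IsWeaklyHarmonicOn.convolution_dilate_eq_of_le (h : IsWeaklyHarmonicOn μ f Ω)
    (hf : LocallyIntegrable f μ) (hρ : IsMollifierWithPotential μ ρ ψ) (ha : 0 < a)
    (hx : closedBall x a⁻¹ ⊆ Ω) {b : ℝ} (hab : a ≤ b) :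
    (f ⋆[(lsmul ℝ ℝ).flip, μ] dilate ρ b) x = (f ⋆[(lsmul ℝ ℝ).flip, μ] dilate ρ a) x := by
  have hderiv (c : ℝ) (hc : a ≤ c) :
      HasDerivAt (fun b => (f ⋆[(lsmul ℝ ℝ).flip, μ] dilate ρ b) x) 0 c :=
    h.hasDerivAt_convolution_dilate hf hρ (ha.trans_le hc)
      ((closedBall_subset_closedBall (inv_anti₀ ha hc)).trans hx)
  exact constant_of_has_deriv_right_zero
    (fun c hc => (hderiv c hc.1).continuousAt.continuousWithinAt)
    (fun c hc => (hderiv c hc.1).hasDerivWithinAt) b ⟨hab, le_rfl⟩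

variable [μ.IsAddHaarMeasure] [CompleteSpace X]

lemma IsWeaklyHarmonicOn.exists_harmonicOnNhd_ae_eq_of_closedBall_subset
    (h : IsWeaklyHarmonicOn μ f Ω) (hf : LocallyIntegrable f μ) {V : Set E} (hV : IsOpen V)
    {r : ℝ} (hr : 0 < r) (hVΩ : ∀ x ∈ V, closedBall x r ⊆ Ω) :
    ∃ u : E → X, ContDiff ℝ ∞ u ∧ HarmonicOnNhd u V ∧ f =ᵐ[μ.restrict V] u := by
  obtain ⟨ρ, ψ, hρ⟩ := exists_isMollifierWithPotential μ
  have hr' : 0 < r⁻¹ := inv_pos.2 hr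
  have hVΩ' : ∀ x ∈ V, closedBall x r⁻¹⁻¹ ⊆ Ω := by simpa only [inv_inv] using hVΩ
  have hcompact := hasCompactSupport_dilate hρ.tsupport_subset hr'
  have hsmooth : ContDiff ℝ ∞ (dilate ρ r⁻¹) := contDiff_dilate hρ.contDiff
  have hu : ContDiff ℝ ∞ (f ⋆[(lsmul ℝ ℝ).flip, μ] dilate ρ r⁻¹) :=
    hcompact.contDiff_convolution_right (n := ⊤) _ hf hsmooth
  refine ⟨_, hu, fun x hx => ⟨(contDiff_infty.1 hu 2).contDiffAt, ?_⟩, ?_⟩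
  · filter_upwards [hV.mem_nhds hx] with y hy
    rw [laplacian_convolution_right _ hf (contDiff_infty.1 hsmooth 2) hcompact]
    exact h.convolution_laplacian_dilate_eq_zero hρ.contDiff hρ.tsupport_subset hr' (hVΩ' y hy)
  · refine (ae_restrict_iff' hV.measurableSet).2 ?_
    filter_upwards [ae_tendsto_convolution_dilate hf hρ.contDiff.continuous hρ.tsupport_subset
      hρ.integral_eq_one] with x hlim hx
    refine tendsto_nhds_unique hlim (tendsto_const_nhds.congr' ?_)
    filter_upwards [eventually_ge_atTop r⁻¹] with b hb
    exact (h.convolution_dilate_eq_of_le hf hρ hr' (hVΩ' x hx) hb).symm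

lemma IsWeaklyHarmonicOn.exists_harmonicOnNhd_ae_eq_nhds
    (h : IsWeaklyHarmonicOn μ f Ω) (hΩ : IsOpen Ω) (hf : LocallyIntegrableOn f Ω μ) (hx : x ∈ Ω) :
    ∃ V, IsOpen V ∧ x ∈ V ∧
      ∃ u : E → X, ContDiff ℝ ∞ u ∧ HarmonicOnNhd u V ∧ f =ᵐ[μ.restrict V] u := by
  obtain ⟨ε, hε, hεΩ⟩ := nhds_basis_closedBall.mem_iff.1 (hΩ.mem_nhds hx)
  have hint : Integrable ((closedBall x ε).indicator f) μ :=
    (hf.integrableOn_compact_subset hεΩ (isCompact_closedBall x ε)).integrable_indicator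
      measurableSet_closedBall
  have hsub (y : E) (hy : y ∈ ball x (ε / 2)) : closedBall y (ε / 2) ⊆ closedBall x ε :=
    closedBall_subset_closedBall' (by linarith [mem_ball.1 hy])
  obtain ⟨u, hu, hharm, hae⟩ := (h.indicator hεΩ).exists_harmonicOnNhd_ae_eq_of_closedBall_subset
    hint.locallyIntegrable isOpen_ball (half_pos hε) hsub
  refine ⟨ball x (ε / 2), isOpen_ball, mem_ball_self (half_pos hε), u, hu, hharm, ?_⟩
  filter_upwards [hae, ae_restrict_mem measurableSet_ball] with y hy hyx
  rwa [indicator_of_mem (hsub y hyx (mem_closedBall_self (half_pos hε).le))] at hy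

end WeaklyHarmonic

section Gluing

variable {E X : Type*} [TopologicalSpace E] [MeasurableSpace E] {μ : Measure E}

lemma ae_eq_restrict_of_forall_exists_nhdsWithin [SecondCountableTopology E] {f g : E → X}
    {Ω : Set E} (h : ∀ x ∈ Ω, ∃ V ∈ 𝓝[Ω] x, f =ᵐ[μ.restrict V] g) :
    f =ᵐ[μ.restrict Ω] g := by
  choose! V hV hfg using h
  obtain ⟨t, htΩ, ht, hcover⟩ := TopologicalSpace.countable_cover_nhdsWithin hV
  exact ae_restrict_of_ae_restrict_of_subset hcover <|
    (ae_restrict_biUnion_iff V ht _).2 fun x hx => hfg x (htΩ hx)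

lemma eqOn_diag_of_ae_eq [TopologicalSpace X] [T2Space X] [OpensMeasurableSpace E]
    [μ.IsOpenPosMeasure] {f : E → X} {Ω : Set E} {V : E → Set E} {u : E → E → X}
    (hV : ∀ x ∈ Ω, IsOpen (V x)) (hmem : ∀ x ∈ Ω, x ∈ V x)
    (hu : ∀ x ∈ Ω, ContinuousOn (u x) (V x)) (hfu : ∀ x ∈ Ω, f =ᵐ[μ.restrict (V x)] u x) {x : E}
    (hx : x ∈ Ω) : EqOn (fun y => u y y) (u x) (Ω ∩ V x) := by
  rintro y ⟨hy, hyx⟩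
  have hae : u y =ᵐ[μ.restrict (V y ∩ V x)] u x := by
    filter_upwards [ae_restrict_of_ae_restrict_of_subset inter_subset_left (hfu y hy),
      ae_restrict_of_ae_restrict_of_subset inter_subset_right (hfu x hx)] with z hzy hzx
    rw [← hzy, hzx]
  exact Measure.eqOn_open_of_ae_eq hae ((hV y hy).inter (hV x hx))
    ((hu y hy).mono inter_subset_left) ((hu x hx).mono inter_subset_right) ⟨hmem y hy, hyx⟩

end Gluing

lemma isWeaklyHarmonicOn_of_setIntegral_lap_smul_eq_zero {d : ℕ} {X : Type*}
    [NormedAddCommGroup X] [NormedSpace ℝ X] {Ω : Set (EuclideanSpace ℝ (Fin d))}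
    {f : EuclideanSpace ℝ (Fin d) → X}
    (h : ∀ φ : EuclideanSpace ℝ (Fin d) → ℝ, ContDiff ℝ ∞ φ → HasCompactSupport φ →
      tsupport φ ⊆ Ω → ∫ ξ in Ω, lap φ ξ • f ξ = 0) :
    IsWeaklyHarmonicOn volume f Ω := by
  intro φ hφ hφc hφΩ
  have hlap (ξ) : lap φ ξ = Δ φ ξ := lap_eq_laplacian (contDiff_infty.1 hφ 2).contDiffAt
  rw [← h φ hφ hφc hφΩ, setIntegral_eq_integral_of_forall_compl_eq_zero]
  · simp only [hlap]
  · intro ξ hξ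
    rw [hlap, image_eq_zero_of_notMem_tsupport fun hξφ => hξ (hφΩ (tsupport_laplacian_subset hξφ)),
      zero_smul]

theorem weyl_lemma_general {E X : Type*} [NormedAddCommGroup E] [InnerProductSpace ℝ E]
    [FiniteDimensional ℝ E] [MeasurableSpace E] [BorelSpace E] [NormedAddCommGroup X]
    [NormedSpace ℝ X] [CompleteSpace X] {μ : Measure E} [μ.IsAddHaarMeasure] {Ω : Set E}
    (hΩ : IsOpen Ω) {f : E → X} (hf : LocallyIntegrableOn f Ω μ) (h : IsWeaklyHarmonicOn μ f Ω) :
    ∃ g : E → X, ContDiffOn ℝ ∞ g Ω ∧ HarmonicOnNhd g Ω ∧ f =ᵐ[μ.restrict Ω] g := by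
  choose! V hV hmem u hu hharm hfu using
    fun x (hx : x ∈ Ω) => h.exists_harmonicOnNhd_ae_eq_nhds hΩ hf hx
  have heqOn {x : E} (hx : x ∈ Ω) : EqOn (fun y => u y y) (u x) (Ω ∩ V x) :=
    eqOn_diag_of_ae_eq hV hmem (fun x hx => (hu x hx).continuous.continuousOn) hfu hx
  have hnhds {x : E} (hx : x ∈ Ω) : Ω ∩ V x ∈ 𝓝 x :=
    inter_mem (hΩ.mem_nhds hx) ((hV x hx).mem_nhds (hmem x hx))
  have hlocal {x : E} (hx : x ∈ Ω) : (fun y => u y y) =ᶠ[𝓝 x] u x :=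
    (heqOn hx).eventuallyEq_of_mem (hnhds hx)
  refine ⟨fun y => u y y, fun x hx => ?_, fun x hx => ?_, ?_⟩
  · exact ((hu x hx).contDiffAt.congr_of_eventuallyEq (hlocal hx)).contDiffWithinAt
  · exact (harmonicAt_congr_nhds (hlocal hx)).2 (hharm x hx x (hmem x hx))
  · refine ae_eq_restrict_of_forall_exists_nhdsWithin fun x hx =>
      ⟨Ω ∩ V x, mem_nhdsWithin_of_mem_nhds (hnhds hx), ?_⟩
    filter_upwards [ae_restrict_of_ae_restrict_of_subset inter_subset_right (hfu x hx),
      ae_restrict_mem (hΩ.inter (hV x hx)).measurableSet] with y hfy hy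
    exact hfy.trans (heqOn hx hy).symm

/-- **vector-valued Weyl lemma.** If `f ∈ L¹_loc(Ω, X)` satisfies `Δf = 0`
in the sense of distributions, then `f` has a harmonic representative `f* ∈ C^∞(Ω, X)`
with `Δf* = 0` on `Ω` and `f = f*` a.e. on `Ω`. -/
theorem weyl_lemma {d : ℕ} {X : Type*} [NormedAddCommGroup X] [NormedSpace ℝ X]
    [CompleteSpace X] {Ω : Set (EuclideanSpace ℝ (Fin d))} (hΩ : IsOpen Ω)
    (f : EuclideanSpace ℝ (Fin d) → X) (hf : LocallyIntegrableOn f Ω)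
    (hweak : ∀ φ : EuclideanSpace ℝ (Fin d) → ℝ, ContDiff ℝ (⊤ : ℕ∞) φ →
      HasCompactSupport φ → tsupport φ ⊆ Ω → ∫ ξ in Ω, (lap φ ξ) • f ξ = 0) :
    ∃ fstar : EuclideanSpace ℝ (Fin d) → X,
      ContDiffOn ℝ (⊤ : ℕ∞) fstar Ω ∧ (∀ x ∈ Ω, lap fstar x = 0) ∧
      f =ᵐ[volume.restrict Ω] fstar := by
  obtain ⟨g, hg, hharm, hfg⟩ :=
    weyl_lemma_general hΩ hf (isWeaklyHarmonicOn_of_setIntegral_lap_smul_eq_zero hweak)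
  exact ⟨g, hg, fun x hx => (lap_eq_laplacian (hharm x hx).1).trans (hharm x hx).2.eq_of_nhds, hfg⟩
end

section
/- Let Ω ⊆ ℂ be open and let f ∈ L¹_loc(Ω, ℂ) be such that u := Re f and v := Im f satisfy the Cauchy–Riemann equations in the sense of distributions, i.e. D₁u = D₂v and D₂u = −D₁v in D'(Ω): for every φ ∈ C_c^∞(Ω, ℝ), ∫_Ω u D₁φ = ∫_Ω v D₂φ and ∫_Ω u D₂φ = −∫_Ω v D₁φ. Then f has a holomorphic representative: there exists a holomorphic function f* : Ω → ℂ with f = f* almost everywhere on Ω. -/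
open MeasureTheory

/-!
The Cauchy–Riemann equations in the sense of distributions, tested against translates of a kernel
`φ`, say that `φ ⋆ f` satisfies the classical ones; so `φ ⋆ f` is holomorphic near every point `x`
with `x - tsupport φ ⊆ Ω`. A radial kernel `ρ` of total mass `1` reproduces holomorphic functions
by the mean value property. Hence, for bump functions `φₙ` shrinking to the origin, `φₙ ⋆ (ρ ⋆ f) =
ρ ⋆ (φₙ ⋆ f) = φₙ ⋆ f`, and letting `n → ∞` shows that `f` agrees almost everywhere with the
holomorphic function `ρ ⋆ f`. Since `ρ` has a fixed radius this is a local statement, but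
continuous local representatives agree on overlaps and therefore glue.
-/

open Complex ContinuousLinearMap Filter Function Metric Set Topology
open scoped ContDiff Convolution

section Convolution

variable {G E : Type*} [NormedAddCommGroup E] [NormedSpace ℝ E] [MeasurableSpace G]
  {μ : Measure G}

theorem convolution_lsmul_left_comm [AddCommGroup G] [TopologicalSpace G]
    [IsTopologicalAddGroup G] [LocallyCompactSpace G] [SecondCountableTopology G] [BorelSpace G]
    [μ.IsAddHaarMeasure] [CompleteSpace E] {φ ψ : G → ℝ} {g : G → E}
    (hφ : Continuous φ) (hφc : HasCompactSupport φ) (hψ : Continuous ψ)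
    (hψc : HasCompactSupport ψ) (hg : LocallyIntegrable g μ) :
    φ ⋆[lsmul ℝ ℝ, μ] (ψ ⋆[lsmul ℝ ℝ, μ] g) = ψ ⋆[lsmul ℝ ℝ, μ] (φ ⋆[lsmul ℝ ℝ, μ] g) := by
  have hg_norm : LocallyIntegrable (fun x ↦ ‖g x‖) μ := fun x ↦ (hg x).norm
  have assoc {α β : G → ℝ} (hα : Continuous α) (hαc : HasCompactSupport α) (hβ : Continuous β)
      (hβc : HasCompactSupport β) :
      (α ⋆[lsmul ℝ ℝ, μ] β) ⋆[lsmul ℝ ℝ, μ] g = α ⋆[lsmul ℝ ℝ, μ] (β ⋆[lsmul ℝ ℝ, μ] g) := by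
    ext x
    refine convolution_assoc _ _ _ _ (fun a b v ↦ mul_smul a b v) hα.aestronglyMeasurable
      hβ.aestronglyMeasurable hg.aestronglyMeasurable
      (.of_forall (hαc.convolutionExists_left _ hα hβ.locallyIntegrable))
      (.of_forall (hβc.norm.convolutionExists_left _ hβ.norm hg_norm)) ?_
    exact hαc.norm.convolutionExists_left _ hα.norm
      (hβc.norm.continuous_convolution_left _ hβ.norm hg_norm).locallyIntegrable x
  have comm : φ ⋆[lsmul ℝ ℝ, μ] ψ = ψ ⋆[lsmul ℝ ℝ, μ] φ := by
    rw [← convolution_flip]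
    congr 1
    ext
    simp
  rw [← assoc hφ hφc hψ hψc, comm, assoc hψ hψc hφ hφc]

variable [NormedAddCommGroup G] [NormedSpace ℝ G] [FiniteDimensional ℝ G] [BorelSpace G]
  [μ.IsAddHaarMeasure]

theorem fderiv_convolution_lsmul_apply {φ : G → ℝ} {g : G → E} (hφ : ContDiff ℝ 1 φ)
    (hφc : HasCompactSupport φ) (hg : LocallyIntegrable g μ) (x v : G) :
    fderiv ℝ (φ ⋆[lsmul ℝ ℝ, μ] g) x v = ∫ t, fderiv ℝ φ (x - t) v • g t ∂μ := by
  have hexists := (hφc.fderiv ℝ).convolutionExists_left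
    ((lsmul ℝ ℝ : ℝ →L[ℝ] E →L[ℝ] E).precompL G) (hφ.continuous_fderiv one_ne_zero) hg x
  rw [(hφc.hasFDerivAt_convolution_left _ hφ hg x).fderiv, convolution_eq_swap,
    integral_apply hexists.integrable_swap]
  rfl

theorem ae_eq_of_forall_bump_convolution_eq [CompleteSpace E] {f g : G → E} {s : Set G} {ε : ℝ}
    (hε : 0 < ε) (hf : Continuous f) (hg : LocallyIntegrable g μ)
    (hfg : ∀ φ : ContDiffBump (0 : G), φ.rOut ≤ ε → ∀ x ∈ s,
      (φ.normed μ ⋆[lsmul ℝ ℝ, μ] f) x = (φ.normed μ ⋆[lsmul ℝ ℝ, μ] g) x) :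
    ∀ᵐ x ∂μ, x ∈ s → f x = g x := by
  let φ (n : ℕ) : ContDiffBump (0 : G) :=
    ⟨ε / (n + 1) / 2, ε / (n + 1), by positivity, half_lt_self (by positivity)⟩
  have hφ_tendsto : Tendsto (fun n ↦ (φ n).rOut) atTop (𝓝 0) := by
    simpa only [mul_zero, mul_one_div] using
      (tendsto_one_div_add_atTop_nhds_zero_nat (𝕜 := ℝ)).const_mul ε
  have hφ_ratio (n : ℕ) : (φ n).rOut ≤ 2 * (φ n).rIn :=
    (mul_div_cancel₀ (ε / (n + 1)) two_ne_zero).ge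
  have hφ_le (n : ℕ) : (φ n).rOut ≤ ε := div_le_self hε.le (by simp)
  filter_upwards [ContDiffBump.ae_convolution_tendsto_right_of_locallyIntegrable hφ_tendsto
    (.of_forall hφ_ratio) hg] with x hgx hxs
  have hfx := ContDiffBump.convolution_tendsto_right_of_continuous (μ := μ) hφ_tendsto hf x
  exact tendsto_nhds_unique hfx (hgx.congr fun n ↦ (hfg (φ n) (hφ_le n) x hxs).symm)

end Convolution

theorem exists_contDiff_radial_integral_eq_one {V : Type*} [NormedAddCommGroup V]
    [InnerProductSpace ℝ V] [FiniteDimensional ℝ V] [MeasurableSpace V] [BorelSpace V]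
    (μ : Measure V) [IsFiniteMeasureOnCompacts μ] [μ.IsOpenPosMeasure] {r : ℝ} (hr : 0 < r) :
    ∃ ρ : V → ℝ, ContDiff ℝ ∞ ρ ∧ (∀ v w, ‖v‖ = ‖w‖ → ρ v = ρ w) ∧
      support ρ ⊆ closedBall 0 r ∧ ∫ v, ρ v ∂μ = 1 := by
  let η : V → ℝ := fun v ↦ Real.smoothTransition (r ^ 2 - ‖v‖ ^ 2)
  have hη : ContDiff ℝ ∞ η :=
    Real.smoothTransition.contDiff.comp (contDiff_const.sub (contDiff_norm_sq ℝ))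
  have hη_support : support η ⊆ closedBall 0 r := by
    intro v hv
    rw [mem_closedBall_zero_iff]
    by_contra! hlt
    exact hv (Real.smoothTransition.zero_of_nonpos (by nlinarith))
  have hη_integral : 0 < ∫ v, η v ∂μ := by
    refine hη.continuous.integral_pos_of_hasCompactSupport_nonneg_nonzero
      (.of_support_subset_isCompact (isCompact_closedBall 0 r) hη_support)
      (fun v ↦ Real.smoothTransition.nonneg _) (x := 0) ?_
    exact (Real.smoothTransition.pos_of_pos (by simpa using pow_pos hr 2)).ne'
  refine ⟨fun v ↦ (∫ w, η w ∂μ)⁻¹ * η v, contDiff_const.mul hη, ?_, ?_, ?_⟩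
  · intro v w hvw
    simp only [η, hvw]
  · exact (support_mul_subset_right _ _).trans hη_support
  · rw [integral_const_mul, inv_mul_cancel₀ hη_integral.ne']

section MeanValue

variable {E : Type*} [NormedAddCommGroup E]

section Polar

variable [NormedSpace ℝ E]

theorem integrableOn_polarCoord_target {F : ℂ → E} (hF : Integrable F) :
    IntegrableOn (fun p : ℝ × ℝ ↦ p.1 • F (Complex.polarCoord.symm p)) polarCoord.target := by
  have hF' : Integrable fun p ↦ F (measurableEquivRealProd.symm p) :=
    volume_preserving_equiv_real_prod.symm.integrable_comp_of_integrable hF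
  have hpolar := (integrableOn_image_iff_integrableOn_abs_det_fderiv_smul volume
    polarCoord.open_target.measurableSet
    (fun p _ ↦ (hasFDerivAt_polarCoord_symm p).hasFDerivWithinAt) polarCoord.symm.injOn
    (fun p ↦ F (measurableEquivRealProd.symm p))).1 hF'.integrableOn
  refine hpolar.congr_fun (fun p hp ↦ ?_) polarCoord.open_target.measurableSet
  simp only [det_fderivPolarCoordSymm, abs_of_pos (mem_Ioi.1 hp.1),
    measurableEquivRealProd_symm_polarCoord_symm_apply]

theorem integral_polarCoord_symm_eq_circleAverage (F : ℂ → E) (s : ℝ) :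
    ∫ θ in Ioo (-Real.pi) Real.pi, F (Complex.polarCoord.symm (s, θ)) =
      (2 * Real.pi) • Real.circleAverage F 0 s := by
  rw [Real.circleAverage_eq_integral_add (-Real.pi), smul_inv_smul₀ Real.two_pi_pos.ne',
    intervalIntegral.integral_comp_add_right (fun θ ↦ F (circleMap 0 s θ)), zero_add,
    two_mul, add_neg_cancel_right, intervalIntegral.integral_of_le (by linarith [Real.pi_pos]),
    integral_Ioc_eq_integral_Ioo]
  simp only [Complex.polarCoord_symm_apply, circleMap_zero, exp_mul_I, ofReal_cos, ofReal_sin]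

theorem integral_eq_integral_circleAverage {F : ℂ → E} (hF : Integrable F) :
    ∫ z, F z = ∫ s in Ioi (0 : ℝ), (2 * Real.pi * s) • Real.circleAverage F 0 s := by
  rw [← Complex.integral_comp_polarCoord_symm, polarCoord_target, Measure.volume_eq_prod,
    setIntegral_prod _ (integrableOn_polarCoord_target hF)]
  simp only [integral_smul, integral_polarCoord_symm_eq_circleAverage, smul_smul, mul_comm]

end Polar

variable [NormedSpace ℂ E] [CompleteSpace E]

theorem radial_convolution_eq_of_diffContOnCl {h : ℂ → E} {ρ : ℂ → ℝ} {x : ℂ} {r : ℝ}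
    (hh : DiffContOnCl ℂ h (ball x r)) (hρ : Integrable ρ)
    (hρ_radial : ∀ z w, ‖z‖ = ‖w‖ → ρ z = ρ w) (hρ_support : support ρ ⊆ closedBall 0 r)
    (hρ_integral : ∫ z, ρ z = 1) :
    (ρ ⋆[lsmul ℝ ℝ, volume] h) x = h x := by
  let k : ℂ → E := fun w ↦ h (x - w)
  have hk : DiffContOnCl ℂ k (ball 0 r) := by
    refine hh.comp (differentiable_id.const_sub x).diffContOnCl fun w hw ↦ ?_
    simpa [dist_eq_norm] using hw
  have hρk : Integrable fun w ↦ ρ w • k w := by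
    refine (integrableOn_iff_integrable_of_support_subset
      ((support_smul_subset_left ρ k).trans hρ_support)).1 ?_
    exact hρ.integrableOn.smul_continuousOn hk.continuousOn_ball (isCompact_closedBall 0 r)
  have hmean (s : ℝ) : Real.circleAverage (fun w ↦ ρ w • k w) 0 s =
      Real.circleAverage (fun w ↦ ρ w • k 0) 0 s := by
    have hρ_sphere (v : ℂ → E) : Real.circleAverage (fun w ↦ ρ w • v w) 0 s =
        ρ s • Real.circleAverage v 0 s := by
      rw [← Real.circleAverage_fun_smul]
      refine Real.circleAverage_congr_sphere fun w hw ↦ ?_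
      simp only [hρ_radial w s (by simpa using hw)]
    rw [hρ_sphere, hρ_sphere, Real.circleAverage_const]
    by_cases hs : ρ s = 0
    · simp only [hs, zero_smul]
    · have hsr : |s| ≤ r := by simpa using hρ_support hs
      rw [(hk.mono (ball_subset_ball hsr)).circleAverage]
  calc (ρ ⋆[lsmul ℝ ℝ, volume] h) x = ∫ w, ρ w • k w := convolution_lsmul
    _ = ∫ w, ρ w • k 0 := by
      rw [integral_eq_integral_circleAverage hρk,
        integral_eq_integral_circleAverage (hρ.smul_const _)]
      simp only [hmean]
    _ = h x := by simp only [integral_smul_const, hρ_integral, one_smul, k, sub_zero]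

end MeanValue

section WeakCauchyRiemann

variable {E : Type*} [NormedAddCommGroup E] [NormedSpace ℂ E] {f g : ℂ → E} {U V : Set ℂ}

/-- The Cauchy–Riemann equation `∂f/∂y = i ∂f/∂x` on `U` in the sense of distributions. Test
functions are real-valued and supported in `U`, so only the values of `f` on `U` matter. The notion
is meaningful for `f` locally integrable on `U`; otherwise some of the integrals may be junk. -/
def WeakCauchyRiemannOn (f : ℂ → E) (U : Set ℂ) : Prop :=
  ∀ φ : ℂ → ℝ, ContDiff ℝ ∞ φ → HasCompactSupport φ → tsupport φ ⊆ U →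
    ∫ z, fderiv ℝ φ z I • f z = I • ∫ z, fderiv ℝ φ z 1 • f z

theorem support_fderiv_apply_smul_subset (φ : ℂ → ℝ) (v : ℂ) (f : ℂ → E) :
    support (fun z ↦ fderiv ℝ φ z v • f z) ⊆ tsupport φ := by
  refine (support_smul_subset_left (fun z ↦ fderiv ℝ φ z v) f).trans ?_
  exact subset_closure.trans (tsupport_fderiv_apply_subset ℝ v)

theorem integrable_fderiv_apply_smul {φ : ℂ → ℝ}
    (hf : LocallyIntegrableOn f U) (hφ : ContDiff ℝ 1 φ) (hφc : HasCompactSupport φ)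
    (hφU : tsupport φ ⊆ U) (v : ℂ) : Integrable fun z ↦ fderiv ℝ φ z v • f z := by
  refine (integrableOn_iff_integrable_of_support_subset
    (support_fderiv_apply_smul_subset φ v f)).1 ?_
  exact (hf.integrableOn_compact_subset hφU hφc.isCompact).continuousOn_smul
    ((hφ.continuous_fderiv one_ne_zero).clm_apply continuous_const).continuousOn hφc.isCompact

theorem weakCauchyRiemannOn_of_re_im {f : ℂ → ℂ} (hf : LocallyIntegrableOn f U)
    (h₁ : ∀ φ : ℂ → ℝ, ContDiff ℝ ∞ φ → HasCompactSupport φ → tsupport φ ⊆ U →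
      ∫ z in U, (f z).re * fderiv ℝ φ z 1 = ∫ z in U, (f z).im * fderiv ℝ φ z I)
    (h₂ : ∀ φ : ℂ → ℝ, ContDiff ℝ ∞ φ → HasCompactSupport φ → tsupport φ ⊆ U →
      ∫ z in U, (f z).re * fderiv ℝ φ z I = -∫ z in U, (f z).im * fderiv ℝ φ z 1) :
    WeakCauchyRiemannOn f U := by
  intro φ hφ hφc hφU
  have hint (v : ℂ) : IntegrableOn (fun z ↦ fderiv ℝ φ z v • f z) U :=
    (integrable_fderiv_apply_smul hf (hφ.of_le (by norm_cast)) hφc hφU v).integrableOn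
  have hsetIntegral (v : ℂ) :
      ∫ z, fderiv ℝ φ z v • f z = ∫ z in U, fderiv ℝ φ z v • f z :=
    (setIntegral_eq_integral_of_forall_compl_eq_zero fun z hz ↦ notMem_support.1 fun h ↦
      hz (hφU (support_fderiv_apply_smul_subset φ v f h))).symm
  have hre (v : ℂ) : (∫ z, fderiv ℝ φ z v • f z).re = ∫ z in U, (f z).re * fderiv ℝ φ z v := by
    rw [hsetIntegral, ← reCLM_apply, ← reCLM.integral_comp_comm (hint v)]
    simp only [reCLM_apply, smul_re, smul_eq_mul, mul_comm]
  have him (v : ℂ) : (∫ z, fderiv ℝ φ z v • f z).im = ∫ z in U, (f z).im * fderiv ℝ φ z v := by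
    rw [hsetIntegral, ← imCLM_apply, ← imCLM.integral_comp_comm (hint v)]
    simp only [imCLM_apply, smul_im, smul_eq_mul, mul_comm]
  apply Complex.ext
  · rw [smul_eq_mul, I_mul_re, hre, him, h₂ φ hφ hφc hφU]
  · rw [smul_eq_mul, I_mul_im, hre, him, h₁ φ hφ hφc hφU]

namespace WeakCauchyRiemannOn

theorem mono (hf : WeakCauchyRiemannOn f U) (hVU : V ⊆ U) : WeakCauchyRiemannOn f V :=
  fun φ hφ hφc hφV ↦ hf φ hφ hφc (hφV.trans hVU)

theorem congr (hf : WeakCauchyRiemannOn f U) (hfg : EqOn f g U) : WeakCauchyRiemannOn g U := by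
  intro φ hφ hφc hφU
  have hcongr (v : ℂ) : (fun z ↦ fderiv ℝ φ z v • f z) = fun z ↦ fderiv ℝ φ z v • g z := by
    ext z
    by_cases hz : z ∈ tsupport φ
    · rw [hfg (hφU hz)]
    · rw [fderiv_of_notMem_tsupport ℝ hz]
      simp only [zero_apply, zero_smul]
  simpa only [hcongr] using hf φ hφ hφc hφU

theorem differentiableAt_convolution {φ : ℂ → ℝ} {x : ℂ} (hf : WeakCauchyRiemannOn f U)
    (hf_int : LocallyIntegrable f) (hφ : ContDiff ℝ ∞ φ) (hφc : HasCompactSupport φ)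
    (hφU : ∀ t ∈ tsupport φ, x - t ∈ U) :
    DifferentiableAt ℂ (φ ⋆[lsmul ℝ ℝ, volume] f) x := by
  have hφ₁ : ContDiff ℝ 1 φ := hφ.of_le (by norm_cast)
  let χ : ℂ → ℝ := fun t ↦ φ (x - t)
  have hχ_fderiv (t v : ℂ) : fderiv ℝ φ (x - t) v = -fderiv ℝ χ t v := by
    have hφ_deriv := (hφ₁.differentiable one_ne_zero (x - t)).hasFDerivAt
    have hχ : HasFDerivAt χ _ t := hφ_deriv.comp t ((hasFDerivAt_id t).const_sub x)
    simp only [hχ.fderiv, ContinuousLinearMap.comp_apply, neg_apply, id_apply, map_neg, neg_neg]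
  have hχ_tsupport : tsupport χ = (fun t ↦ x - t) ⁻¹' tsupport φ :=
    tsupport_comp_eq_preimage φ (Homeomorph.subLeft x)
  have hCR := hf χ (hφ.comp (contDiff_const.sub contDiff_id))
    (hφc.comp_homeomorph (Homeomorph.subLeft x)) fun t ht ↦ by
      simpa using hφU _ (hχ_tsupport.subset ht)
  rw [differentiableAt_complex_iff_differentiableAt_real]
  refine ⟨(hφc.hasFDerivAt_convolution_left _ hφ₁ hf_int x).differentiableAt, ?_⟩
  simp only [fderiv_convolution_lsmul_apply hφ₁ hφc hf_int, hχ_fderiv, neg_smul, integral_neg,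
    smul_neg, hCR]

theorem differentiableOn_convolution_ball {φ : ℂ → ℝ} {c : ℂ} {r R : ℝ}
    (hf : WeakCauchyRiemannOn f (ball c (R + r))) (hf_int : LocallyIntegrable f)
    (hφ : ContDiff ℝ ∞ φ) (hφ_support : support φ ⊆ closedBall 0 r) :
    DifferentiableOn ℂ (φ ⋆[lsmul ℝ ℝ, volume] f) (ball c R) := by
  intro x hx
  refine (hf.differentiableAt_convolution hf_int hφ
    (.of_support_subset_isCompact (isCompact_closedBall 0 r) hφ_support)
    fun t ht ↦ ?_).differentiableWithinAt
  have ht : ‖t‖ ≤ r := by simpa using closure_minimal hφ_support isClosed_closedBall ht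
  rw [mem_ball_iff_norm] at hx ⊢
  calc ‖x - t - c‖ = ‖x - c - t‖ := by rw [sub_right_comm]
    _ ≤ ‖x - c‖ + ‖t‖ := norm_sub_le _ _
    _ < R + r := add_lt_add_of_lt_of_le hx ht

variable [CompleteSpace E]

theorem ae_radial_convolution_eq {ρ : ℂ → ℝ} {c : ℂ} {r : ℝ} (hr : 0 < r)
    (hf : WeakCauchyRiemannOn f (ball c (3 * r))) (hf_int : LocallyIntegrable f)
    (hρ : Continuous ρ) (hρ_radial : ∀ z w, ‖z‖ = ‖w‖ → ρ z = ρ w)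
    (hρ_support : support ρ ⊆ closedBall 0 r) (hρ_integral : ∫ z, ρ z = 1) :
    ∀ᵐ x, x ∈ ball c r → (ρ ⋆[lsmul ℝ ℝ, volume] f) x = f x := by
  have hρc : HasCompactSupport ρ :=
    .of_support_subset_isCompact (isCompact_closedBall 0 r) hρ_support
  refine ae_eq_of_forall_bump_convolution_eq hr
    (hρc.continuous_convolution_left _ hρ hf_int) hf_int fun φ hφr x hx ↦ ?_
  have hφ_cont : Continuous (φ.normed volume) := (φ.contDiff_normed (n := 0)).continuous
  have hφ_holo : DifferentiableOn ℂ (φ.normed volume ⋆[lsmul ℝ ℝ, volume] f) (ball c (2 * r)) := by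
    refine differentiableOn_convolution_ball (r := r) (by convert hf using 2; ring) hf_int
      φ.contDiff_normed ?_
    rw [φ.support_normed_eq]
    exact ball_subset_closedBall.trans (closedBall_subset_closedBall hφr)
  have hball : closedBall x r ⊆ ball c (2 * r) :=
    closedBall_subset_ball' (by linarith [mem_ball.1 hx])
  rw [convolution_lsmul_left_comm hφ_cont φ.hasCompactSupport_normed hρ hρc hf_int]
  exact radial_convolution_eq_of_diffContOnCl (hφ_holo.diffContOnCl_ball hball)
    (hρ.integrable_of_hasCompactSupport hρc) hρ_radial hρ_support hρ_integral

theorem exists_differentiableOn_ball_ae_eq {c : ℂ} {r : ℝ} (hr : 0 < r)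
    (hf : WeakCauchyRiemannOn f (ball c (3 * r))) (hf_int : IntegrableOn f (ball c (3 * r))) :
    ∃ F : ℂ → E, DifferentiableOn ℂ F (ball c r) ∧ f =ᵐ[volume.restrict (ball c r)] F := by
  obtain ⟨ρ, hρ, hρ_radial, hρ_support, hρ_integral⟩ :=
    exists_contDiff_radial_integral_eq_one (volume : Measure ℂ) hr
  set g := (ball c (3 * r)).indicator f
  have hgf : EqOn g f (ball c (3 * r)) := fun z hz ↦ indicator_of_mem hz f
  have hg_int : LocallyIntegrable g :=
    (hf_int.integrable_indicator measurableSet_ball).locallyIntegrable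
  have hg : WeakCauchyRiemannOn g (ball c (3 * r)) := hf.congr hgf.symm
  refine ⟨ρ ⋆[lsmul ℝ ℝ, volume] g, ?_, ?_⟩
  · exact (hg.mono (ball_subset_ball (by linarith))).differentiableOn_convolution_ball (r := r)
      hg_int hρ hρ_support
  · rw [EventuallyEq, ae_restrict_iff' measurableSet_ball]
    filter_upwards [hg.ae_radial_convolution_eq hr hg_int hρ.continuous hρ_radial hρ_support
      hρ_integral] with x hx hxc
    rw [hx hxc, hgf (ball_subset_ball (by linarith) hxc)]

end WeakCauchyRiemannOn

end WeakCauchyRiemann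

theorem exists_ae_eq_iUnion_of_continuousOn {ι X Y : Type*} [TopologicalSpace X]
    [SecondCountableTopology X] [MeasurableSpace X] [OpensMeasurableSpace X] {μ : Measure X}
    [μ.IsOpenPosMeasure] [TopologicalSpace Y] [T2Space Y] {U : ι → Set X} {F : ι → X → Y}
    {f : X → Y} (hU : ∀ i, IsOpen (U i)) (hF : ∀ i, ContinuousOn (F i) (U i))
    (hfF : ∀ i, f =ᵐ[μ.restrict (U i)] F i) :
    ∃ g : X → Y, (∀ i, EqOn g (F i) (U i)) ∧ f =ᵐ[μ.restrict (⋃ i, U i)] g := by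
  have hcompat (i j : ι) : EqOn (F i) (F j) (U i ∩ U j) := by
    refine Measure.eqOn_open_of_ae_eq (μ := μ) ?_ ((hU i).inter (hU j))
      ((hF i).mono inter_subset_left) ((hF j).mono inter_subset_right)
    filter_upwards [ae_restrict_of_ae_restrict_of_subset inter_subset_left (hfF i),
      ae_restrict_of_ae_restrict_of_subset inter_subset_right (hfF j)] with x hi hj
    exact hi.symm.trans hj
  classical
  let g : X → Y := fun x ↦ if hx : ∃ i, x ∈ U i then F hx.choose x else f x
  have hgF (i : ι) : EqOn g (F i) (U i) := by
    intro x hxi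
    have hx : ∃ j, x ∈ U j := ⟨i, hxi⟩
    simp only [g, dif_pos hx]
    exact hcompat hx.choose i ⟨hx.choose_spec, hxi⟩
  obtain ⟨T, hT, hTU⟩ := TopologicalSpace.isOpen_iUnion_countable U hU
  refine ⟨g, hgF, ?_⟩
  rw [← hTU, EventuallyEq, ae_restrict_biUnion_iff _ hT]
  intro i _
  filter_upwards [hfF i, ae_restrict_mem (hU i).measurableSet] with x hfx hx
  rw [hfx, hgF i hx]

theorem distributional_CR_implies_holomorphic_representative_general {E : Type*}
    [NormedAddCommGroup E] [NormedSpace ℂ E] [CompleteSpace E] {Ω : Set ℂ} (hΩ : IsOpen Ω)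
    (f : ℂ → E) (hf : LocallyIntegrableOn f Ω) (hCR : WeakCauchyRiemannOn f Ω) :
    ∃ fstar : ℂ → E, (∀ z ∈ Ω, DifferentiableAt ℂ fstar z) ∧
      f =ᵐ[volume.restrict Ω] fstar := by
  have hlocal (c : Ω) : ∃ r > 0, ∃ F : ℂ → E, DifferentiableOn ℂ F (ball (c : ℂ) r) ∧
      f =ᵐ[volume.restrict (ball (c : ℂ) r)] F := by
    obtain ⟨R, hR, hRΩ⟩ := nhds_basis_closedBall.mem_iff.1 (hΩ.mem_nhds c.2)
    have hball : ball (c : ℂ) (3 * (R / 3)) ⊆ closedBall c R := by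
      rw [mul_div_cancel₀ R three_ne_zero]
      exact ball_subset_closedBall
    exact ⟨R / 3, by positivity, (hCR.mono (hball.trans hRΩ)).exists_differentiableOn_ball_ae_eq
      (by positivity)
      ((hf.integrableOn_compact_subset hRΩ (isCompact_closedBall _ _)).mono_set hball)⟩
  choose r hr F hF hfF using hlocal
  obtain ⟨fstar, hfstar, hae⟩ := exists_ae_eq_iUnion_of_continuousOn (fun _ ↦ isOpen_ball)
    (fun c ↦ (hF c).continuousOn) hfF
  refine ⟨fstar, fun z hz ↦ ?_, ae_restrict_of_ae_restrict_of_subset ?_ hae⟩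
  · exact ((hF ⟨z, hz⟩).congr (hfstar ⟨z, hz⟩)).differentiableAt (ball_mem_nhds z (hr ⟨z, hz⟩))
  · exact fun z hz ↦ mem_iUnion.2 ⟨⟨z, hz⟩, mem_ball_self (hr ⟨z, hz⟩)⟩

/-- If `f ∈ L¹_loc(Ω, ℂ)` (Ω ⊆ ℂ open) satisfies the Cauchy–Riemann
equations `D₁u = D₂v`, `D₂u = -D₁v` (u = Re f, v = Im f) in the sense of distributions,
then `f` has a holomorphic representative. -/
theorem distributional_CR_implies_holomorphic_representative
    {Ω : Set ℂ} (hΩ : IsOpen Ω) (f : ℂ → ℂ) (hf : LocallyIntegrableOn f Ω)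
    (hCR₁ : ∀ φ : ℂ → ℝ, ContDiff ℝ (⊤ : ℕ∞) φ → HasCompactSupport φ → tsupport φ ⊆ Ω →
      ∫ z in Ω, (f z).re * fderiv ℝ φ z 1 =
        ∫ z in Ω, (f z).im * fderiv ℝ φ z Complex.I)
    (hCR₂ : ∀ φ : ℂ → ℝ, ContDiff ℝ (⊤ : ℕ∞) φ → HasCompactSupport φ → tsupport φ ⊆ Ω →
      ∫ z in Ω, (f z).re * fderiv ℝ φ z Complex.I =
        -∫ z in Ω, (f z).im * fderiv ℝ φ z 1) :
    ∃ fstar : ℂ → ℂ, (∀ z ∈ Ω, DifferentiableAt ℂ fstar z) ∧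
      f =ᵐ[volume.restrict Ω] fstar := by
  exact distributional_CR_implies_holomorphic_representative_general hΩ f hf
    (weakCauchyRiemannOn_of_re_im hf hCR₁ hCR₂)
end

section
/- Let Ω ⊆ ℂ be open and let X be a complex Banach space. A function f : Ω → X is holomorphic if and only if it is weakly holomorphic, i.e. x' ∘ f is holomorphic for every x' ∈ X'. In this case f satisfies Cauchy's integral formula: f(z) = (1/(2πi)) ∫_{|w−z₀|=r₀} f(w)/(w−z) dw for every z₀ ∈ Ω and r₀ > 0 with the closed ball B̄(z₀, r₀) ⊆ Ω and every z ∈ B(z₀, r₀). -/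
open MeasureTheory Metric

/-!
Weak differentiability of `f` at `a` bounds `φ (f x - f a)` by a multiple of `‖x - a‖` along every
sequence converging to `a`, for each functional `φ`. By the uniform boundedness principle in the
dual, the same holds for `f x - f a` itself, so `f` is continuous at `a`. Continuity allows
functionals to be taken inside the integrals of `f` over the sides of a rectangle; these integrals
cancel after applying any functional, by Cauchy's theorem, hence they cancel in `X`, and Morera's
theorem applies.
-/

section WeakDifferentiability

variable {𝕜 : Type*} [RCLike 𝕜]
  {E : Type*} [NormedAddCommGroup E] [NormedSpace 𝕜 E]

theorem exists_norm_le_of_forall_strongDual {ι : Type*} {f : ι → E}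
    (h : ∀ φ : StrongDual 𝕜 E, ∃ C, ∀ i, ‖φ (f i)‖ ≤ C) :
    ∃ C, ∀ i, ‖f i‖ ≤ C := by
  simpa only [LinearIsometry.norm_map] using
    banach_steinhaus (g := fun i => NormedSpace.inclusionInDoubleDualLi 𝕜 (f i)) h

theorem exists_norm_le_mul_of_forall_strongDual {ι : Type*} {f : ι → E} {r : ι → ℝ}
    (hr : ∀ i, 0 ≤ r i) (h : ∀ φ : StrongDual 𝕜 E, ∃ C, ∀ i, ‖φ (f i)‖ ≤ C * r i) :
    ∃ C, ∀ i, ‖f i‖ ≤ C * r i := by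
  have eq_zero_of_eq_zero {i : ι} (hi : r i = 0) : f i = 0 := by
    refine SeparatingDual.eq_zero_of_forall_dual_eq_zero (R := 𝕜) fun φ => ?_
    obtain ⟨C, hC⟩ := h φ
    simpa [hi] using hC i
  have norm_quotient (φ : StrongDual 𝕜 E) (i : ι) :
      ‖φ (((r i)⁻¹ : 𝕜) • f i)‖ = ‖φ (f i)‖ / r i := by
    simp [div_eq_inv_mul, abs_of_nonneg (hr i)]
  obtain ⟨C, hC⟩ : ∃ C, ∀ i, ‖((r i)⁻¹ : 𝕜) • f i‖ ≤ C := by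
    refine exists_norm_le_of_forall_strongDual (𝕜 := 𝕜) fun φ => ?_
    obtain ⟨C, hC⟩ := h φ
    refine ⟨max C 0, fun i => ?_⟩
    rw [norm_quotient]
    exact div_le_of_le_mul₀ (hr i) (le_max_right C 0)
      ((hC i).trans (mul_le_mul_of_nonneg_right (le_max_left C 0) (hr i)))
  refine ⟨C, fun i => ?_⟩
  rcases (hr i).eq_or_lt with r_eq_zero | r_pos
  · simp [← r_eq_zero, eq_zero_of_eq_zero r_eq_zero.symm]
  · rw [← div_le_iff₀ r_pos]
    simpa [norm_smul, div_eq_inv_mul, abs_of_pos r_pos] using hC i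

theorem continuousAt_of_forall_strongDual_differentiableAt
    {D : Type*} [NormedAddCommGroup D] [NormedSpace 𝕜 D] {f : D → E} {a : D}
    (h : ∀ φ : StrongDual 𝕜 E, DifferentiableAt 𝕜 (fun x => φ (f x)) a) :
    ContinuousAt f a := by
  refine Filter.tendsto_of_seq_tendsto fun u hu => ?_
  have weak_bound (φ : StrongDual 𝕜 E) : ∃ C, ∀ n, ‖φ (f (u n) - f a)‖ ≤ C * ‖u n - a‖ := by
    refine (Asymptotics.isBigO_nat_atTop_iff fun n hn => ?_).1 ?_
    · rw [sub_eq_zero.1 hn, sub_self, map_zero]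
    · simpa only [map_sub, Function.comp_def] using (h φ).isBigO_sub.comp_tendsto hu
  obtain ⟨C, hC⟩ :=
    exists_norm_le_mul_of_forall_strongDual (fun n => norm_nonneg (u n - a)) weak_bound
  have bound_tendsto : Filter.Tendsto (fun n => C * ‖u n - a‖) Filter.atTop (nhds 0) := by
    simpa using (tendsto_iff_norm_sub_tendsto_zero.1 hu).const_mul C
  exact tendsto_iff_norm_sub_tendsto_zero.2
    (squeeze_zero (fun _ => norm_nonneg _) hC bound_tendsto)

end WeakDifferentiability

section WeakHolomorphy

variable {E : Type*} [NormedAddCommGroup E] [NormedSpace ℂ E] {f : ℂ → E} {U : Set ℂ}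

theorem map_wedgeIntegral [CompleteSpace E]
    {F : Type*} [NormedAddCommGroup F] [NormedSpace ℂ F] [CompleteSpace F]
    (L : E →L[ℂ] F) {z w : ℂ} (hf : ContinuousOn f (Complex.Rectangle z w)) :
    L (Complex.wedgeIntegral z w f) = Complex.wedgeIntegral z w (fun x => L (f x)) := by
  have horizontal :
      IntervalIntegrable (fun x : ℝ => f (x + z.im * Complex.I)) volume z.re w.re :=
    (hf.comp (by fun_prop) fun x hx => by
      simpa [Complex.Rectangle, Complex.mem_reProdIm] using hx).intervalIntegrable
  have vertical :
      IntervalIntegrable (fun y : ℝ => f (w.re + y * Complex.I)) volume z.im w.im :=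
    (hf.comp (by fun_prop) fun y hy => by
      simpa [Complex.Rectangle, Complex.mem_reProdIm] using hy).intervalIntegrable
  simp only [Complex.wedgeIntegral, map_add, map_smul, L.intervalIntegral_comp_comm horizontal,
    L.intervalIntegral_comp_comm vertical]

theorem isConservativeOn_of_forall_strongDual [CompleteSpace E] (hf : ContinuousOn f U)
    (h : ∀ φ : StrongDual ℂ E, Complex.IsConservativeOn (fun x => φ (f x)) U) :
    Complex.IsConservativeOn f U := by
  intro z w hzw
  have hwz : Complex.Rectangle w z ⊆ U := by
    rwa [Complex.Rectangle, Set.uIcc_comm w.re, Set.uIcc_comm w.im]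
  refine (SeparatingDual.eq_iff_forall_dual_eq (R := ℂ)).2 fun φ => ?_
  rw [map_neg, map_wedgeIntegral φ (hf.mono hzw), map_wedgeIntegral φ (hf.mono hwz)]
  exact h φ z w hzw

theorem differentiableOn_of_forall_strongDual [CompleteSpace E] (hU : IsOpen U)
    (h : ∀ φ : StrongDual ℂ E, DifferentiableOn ℂ (fun x => φ (f x)) U) :
    DifferentiableOn ℂ f U := by
  have continuousOn_f : ContinuousOn f U := fun a ha =>
    (continuousAt_of_forall_strongDual_differentiableAt fun φ =>
      (h φ).differentiableAt (hU.mem_nhds ha)).continuousWithinAt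
  have conservative_f : Complex.IsConservativeOn f U :=
    isConservativeOn_of_forall_strongDual continuousOn_f fun φ => (h φ).isConservativeOn
  exact (Complex.isConservativeOn_and_continuousOn_iff_isDifferentiableOn hU).1
    ⟨conservative_f, continuousOn_f⟩

end WeakHolomorphy

/-- `f : Ω → X` (Ω ⊆ ℂ open, X a complex Banach space) is holomorphic
iff it is weakly holomorphic; in that case it satisfies Cauchy's integral formula. -/
theorem weakly_holomorphic_iff_and_cauchy_formula
    {X : Type*} [NormedAddCommGroup X] [NormedSpace ℂ X] [CompleteSpace X]
    {Ω : Set ℂ} (hΩ : IsOpen Ω) (f : ℂ → X) :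
    ((∀ z ∈ Ω, DifferentiableAt ℂ f z) ↔
      ∀ x' : X →L[ℂ] ℂ, ∀ z ∈ Ω, DifferentiableAt ℂ (fun w => x' (f w)) z) ∧
    ((∀ z ∈ Ω, DifferentiableAt ℂ f z) →
      ∀ z₀ ∈ Ω, ∀ r₀ > (0 : ℝ), closedBall z₀ r₀ ⊆ Ω → ∀ z ∈ ball z₀ r₀,
        f z = (2 * Real.pi * Complex.I)⁻¹ • ∮ w in C(z₀, r₀), (w - z)⁻¹ • f w) := by
  refine ⟨⟨fun h x' z hz => x'.differentiableAt.comp z (h z hz), fun h z hz => ?_⟩,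
    fun h z₀ _ r₀ _ hsub z hz => ?_⟩
  · have holomorphic : DifferentiableOn ℂ f Ω :=
      differentiableOn_of_forall_strongDual hΩ fun x' w hw => (h x' w hw).differentiableWithinAt
    exact holomorphic.differentiableAt (hΩ.mem_nhds hz)
  · have diffContOnCl : DiffContOnCl ℂ f (ball z₀ r₀) :=
      DifferentiableOn.diffContOnCl fun w hw =>
        (h w (hsub (closure_ball_subset_closedBall hw))).differentiableWithinAt
    exact (diffContOnCl.two_pi_i_inv_smul_circleIntegral_sub_inv_smul hz).symm
end

section
/- (Vitali's theorem, holomorphic case) Let X be a complex Banach space, let Ω ⊆ ℂ be open and connected, and let (f_n)_{n∈ℕ} be a sequence of holomorphic functions f_n : Ω → X which is locally L¹-bounded, i.e. there exists g ∈ L¹_loc(Ω, ℝ) with ‖f_n(ξ)‖_X ≤ g(ξ) for almost every ξ ∈ Ω and all n. Let N ⊆ Ω be a set of uniqueness for holomorphic functions, and suppose lim_{n→∞} f_n(z) exists for every z ∈ N. Then lim_{n→∞} f_n exists uniformly on every compact subset of Ω and the limit function is holomorphic on Ω. -/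
open MeasureTheory Filter

/-!
Integrating the mean value property over discs turns local `L¹`-boundedness into local uniform
boundedness, and the Schwarz lemma turns the latter into local equicontinuity. Hence
`G z = (F i z)ᵢ` is a continuous map from `Ω` to `ℓ^∞(X)` with holomorphic coordinates, and by
Cauchy's integral formula it is holomorphic. The families that converge along the given filter form
a closed subspace `M` of `ℓ^∞(X)`, and `G` maps `N` into `M`. Composing `G` with the continuous
linear functionals on `ℓ^∞(X) ⧸ M` gives scalar holomorphic functions vanishing on `N`, hence on
`Ω`; so `G` maps all of `Ω` into `M`, and equicontinuity upgrades the resulting pointwise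
convergence to locally uniform convergence.
-/

open Metric Set
open scoped ENNReal Real Topology

/-- `N` is a set of uniqueness for the scalar holomorphic functions on `Ω`. -/
structure IsUniquenessSet (Ω N : Set ℂ) : Prop where
  subset : N ⊆ Ω
  eqOn_zero : ∀ h : ℂ → ℂ, DifferentiableOn ℂ h Ω → EqOn h 0 N → EqOn h 0 Ω

/-- Local uniform boundedness of a family of functions on `S`, the hypothesis of theorems of Montel
type: every point of `S` has a neighbourhood within `S` on which one constant bounds all members. -/
def IsLocallyBoundedOn {ι α E : Type*} [TopologicalSpace α] [Norm E] (F : ι → α → E) (S : Set α) :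
    Prop :=
  ∀ z ∈ S, ∃ C : ℝ, ∀ᶠ w in 𝓝[S] z, ∀ i, ‖F i w‖ ≤ C

section MeanValue

lemma lintegral_eq_lintegral_circleMap {h : ℂ → ℝ≥0∞} (hh : Measurable h) (z : ℂ) :
    ∫⁻ w, h w = ∫⁻ r in Ioi 0, ENNReal.ofReal r * ∫⁻ θ in Ioo (-π) π, h (circleMap z r θ) := by
  have polar_eq : ∀ p : ℝ × ℝ, z + Complex.polarCoord.symm p = circleMap z p.1 p.2 := fun p => by
    simp [circleMap, Complex.exp_mul_I]
  have hmeas : Measurable fun p : ℝ × ℝ => ENNReal.ofReal p.1 * h (circleMap z p.1 p.2) :=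
    measurable_fst.ennreal_ofReal.mul (hh.comp Real.circleMap.continuous.measurable)
  rw [← lintegral_add_left_eq_self h z, ← Complex.lintegral_comp_polarCoord_symm,
    polarCoord_target, Measure.volume_eq_prod, ← Measure.prod_restrict]
  simp only [polar_eq, smul_eq_mul]
  rw [lintegral_prod _ hmeas.aemeasurable]
  simp only [lintegral_const_mul' _ _ ENNReal.ofReal_ne_top]

variable {X : Type*} [NormedAddCommGroup X] [NormedSpace ℂ X] [CompleteSpace X] {f : ℂ → X}
  {z : ℂ} {ρ : ℝ}

lemma ofReal_two_pi_mul_enorm_le_lintegral_circleMap {r : ℝ}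
    (hf : DiffContOnCl ℂ f (ball z |r|)) :
    ENNReal.ofReal (2 * π) * ‖f z‖ₑ ≤ ∫⁻ θ in Ioo (-π) π, ‖f (circleMap z r θ)‖ₑ := by
  have mean_value : (2 * π) • f z = ∫ θ in (-π)..π, f (circleMap z r θ) := by
    rw [← hf.circleAverage, Real.circleAverage_eq_integral_add (-π),
      intervalIntegral.integral_comp_add_right (fun θ => f (circleMap z r θ)),
      smul_inv_smul₀ Real.two_pi_pos.ne']
    congr 1 <;> ring
  calc ENNReal.ofReal (2 * π) * ‖f z‖ₑ = ‖(2 * π) • f z‖ₑ := by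
        rw [enorm_smul, Real.enorm_eq_ofReal Real.two_pi_pos.le]
    _ = ‖∫ θ in Ioo (-π) π, f (circleMap z r θ)‖ₑ := by
        rw [mean_value, intervalIntegral.integral_of_le (by linarith [Real.pi_pos]),
          integral_Ioc_eq_integral_Ioo]
    _ ≤ ∫⁻ θ in Ioo (-π) π, ‖f (circleMap z r θ)‖ₑ := enorm_integral_le_lintegral_enorm _

lemma volume_ball_mul_enorm_le_setLIntegral (hf : DifferentiableOn ℂ f (ball z ρ)) :
    volume (ball z ρ) * ‖f z‖ₑ ≤ ∫⁻ w in ball z ρ, ‖f w‖ₑ := by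
  have hball : MeasurableSet (ball z ρ) := measurableSet_ball
  have measurable_enorm : Measurable ((ball z ρ).indicator fun w => ‖f w‖ₑ) := by
    classical
    rw [← piecewise_eq_indicator]
    exact hf.continuousOn.enorm.measurable_piecewise continuousOn_const hball
  rw [mul_comm, ← setLIntegral_const, ← lintegral_indicator hball, ← lintegral_indicator hball,
    lintegral_eq_lintegral_circleMap (measurable_const.indicator hball) z,
    lintegral_eq_lintegral_circleMap measurable_enorm z]
  refine setLIntegral_mono' measurableSet_Ioi fun r (hr : 0 < r) => mul_le_mul_right ?_ _
  have circleMap_mem_iff : ∀ θ, circleMap z r θ ∈ ball z ρ ↔ r < ρ := fun θ => by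
    rw [mem_ball, dist_eq_norm, circleMap_sub_center, norm_circleMap_zero, abs_of_pos hr]
  by_cases hrρ : r < ρ
  · have hfr : DiffContOnCl ℂ f (ball z |r|) := by
      rw [abs_of_pos hr]
      exact (hf.mono <| closure_ball_subset_closedBall.trans
        (closedBall_subset_ball hrρ)).diffContOnCl
    simpa [circleMap_mem_iff, hrρ, mul_comm, ← two_mul] using
      ofReal_two_pi_mul_enorm_le_lintegral_circleMap hfr
  · simp [circleMap_mem_iff, hrρ]

lemma enorm_le_setLIntegral_div_volume_ball (hρ : 0 < ρ) (hf : DifferentiableOn ℂ f (ball z ρ)) :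
    ‖f z‖ₑ ≤ (∫⁻ w in ball z ρ, ‖f w‖ₑ) / volume (ball z ρ) := by
  rw [ENNReal.le_div_iff_mul_le (.inl (measure_ball_pos volume z hρ).ne')
    (.inl measure_ball_lt_top.ne), mul_comm]
  exact volume_ball_mul_enorm_le_setLIntegral hf

end MeanValue

section LocallyBounded

variable {ι X : Type*} [NormedAddCommGroup X] [NormedSpace ℂ X] {Ω : Set ℂ} {F : ι → ℂ → X}

lemma isLocallyBoundedOn_of_ae_norm_le [CompleteSpace X] (hΩ : IsOpen Ω)
    (hF : ∀ i, DifferentiableOn ℂ (F i) Ω) {g : ℂ → ℝ} (hg : LocallyIntegrableOn g Ω)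
    (hbd : ∀ i, ∀ᵐ ξ ∂(volume.restrict Ω), ‖F i ξ‖ ≤ g ξ) : IsLocallyBoundedOn F Ω := by
  intro z hz
  obtain ⟨R, hR, hRΩ⟩ := nhds_basis_closedBall.mem_iff.1 (hΩ.mem_nhds hz)
  set I : ℝ≥0∞ := ∫⁻ w in closedBall z R, ‖g w‖ₑ
  have hI : I ≠ ∞ :=
    (hg.integrableOn_compact_subset hRΩ (isCompact_closedBall z R)).hasFiniteIntegral.ne
  set V : ℝ≥0∞ := volume (ball z (R / 2))
  have hV : V ≠ 0 := (measure_ball_pos volume z (half_pos hR)).ne'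
  refine ⟨(I / V).toReal, mem_nhdsWithin_of_mem_nhds ?_⟩
  filter_upwards [ball_mem_nhds z (half_pos hR)] with w hw i
  have hsub : ball w (R / 2) ⊆ closedBall z R :=
    (ball_subset_ball' (by linarith [mem_ball.1 hw])).trans ball_subset_closedBall
  have norm_le : ∀ᵐ v ∂(volume.restrict (ball w (R / 2))), ‖F i v‖ₑ ≤ ‖g v‖ₑ := by
    filter_upwards [ae_restrict_of_ae_restrict_of_subset (hsub.trans hRΩ) (hbd i)] with v hv
    exact enorm_le_iff_norm_le.2 (hv.trans (le_abs_self _))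
  have enorm_le : ‖F i w‖ₑ ≤ I / V :=
    calc ‖F i w‖ₑ ≤ (∫⁻ v in ball w (R / 2), ‖F i v‖ₑ) / volume (ball w (R / 2)) :=
          enorm_le_setLIntegral_div_volume_ball (half_pos hR) ((hF i).mono (hsub.trans hRΩ))
      _ ≤ I / volume (ball w (R / 2)) :=
          ENNReal.div_le_div_right ((lintegral_mono_ae norm_le).trans (lintegral_mono_set hsub)) _
      _ = I / V := by rw [Measure.addHaar_ball_center, ← Measure.addHaar_ball_center volume z]
  simpa using ENNReal.toReal_mono (ENNReal.div_ne_top hI hV) enorm_le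

lemma IsLocallyBoundedOn.equicontinuousOn (hbdd : IsLocallyBoundedOn F Ω) (hΩ : IsOpen Ω)
    (hF : ∀ i, DifferentiableOn ℂ (F i) Ω) : EquicontinuousOn F Ω := by
  intro z hz
  obtain ⟨C, hC⟩ := hbdd z hz
  rw [hΩ.nhdsWithin_eq hz] at hC
  obtain ⟨R, hR, hRC⟩ := nhds_basis_ball.mem_iff.1 (hC.and (hΩ.mem_nhds hz))
  have hmaps : ∀ i, MapsTo (F i) (ball z R) (closedBall (F i z) (C + C)) := fun i w hw =>
    (dist_le_norm_add_norm _ _).trans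
      (add_le_add ((hRC hw).1 i) ((hRC (mem_ball_self hR)).1 i))
  have schwarz : ∀ᶠ w in 𝓝 z, ∀ i, dist (F i z) (F i w) ≤ (C + C) / R * dist w z := by
    filter_upwards [ball_mem_nhds z hR] with w hw i
    rw [dist_comm]
    exact Complex.dist_le_div_mul_dist_of_mapsTo_ball ((hF i).mono fun v hv => (hRC hv).2)
      (hmaps i) hw
  refine (equicontinuousAt_of_continuity_modulus _ ?_ F schwarz).equicontinuousWithinAt _
  exact Continuous.tendsto' (by fun_prop) _ _ (by simp)

end LocallyBounded

section WeakHolomorphy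

variable {κ E Y : Type*} [NormedAddCommGroup E] [NormedSpace ℂ E] [CompleteSpace E]
  [NormedAddCommGroup Y] [NormedSpace ℂ Y] [CompleteSpace Y] {G : ℂ → E} {φ : κ → E →L[ℂ] Y}

lemma map_circleIntegral (T : E →L[ℂ] Y) {c : ℂ} {R : ℝ} (hG : CircleIntegrable G c R) :
    T (∮ ζ in C(c, R), G ζ) = ∮ ζ in C(c, R), T (G ζ) := by
  simp only [circleIntegral, ← map_smul]
  exact (T.intervalIntegral_comp_comm hG.out).symm

lemma two_pi_I_inv_smul_circleIntegral_of_separating (hφ : ∀ x, (∀ k, φ k x = 0) → x = 0)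
    {c w : ℂ} {R : ℝ} (hG : ContinuousOn G (closedBall c R))
    (hφG : ∀ k, DifferentiableOn ℂ (fun z => φ k (G z)) (closedBall c R)) (hw : w ∈ ball c R) :
    (2 * π * Complex.I : ℂ)⁻¹ • ∮ ζ in C(c, R), (ζ - w)⁻¹ • G ζ = G w := by
  have hR : 0 ≤ R := (pos_of_mem_ball hw).le
  have hζw : ∀ ζ ∈ sphere c R, ζ - w ≠ 0 := fun ζ hζ =>
    sub_ne_zero.2 (ne_of_mem_of_not_mem hζ fun h => (mem_ball.1 hw).ne h)
  have integrable : CircleIntegrable (fun ζ => (ζ - w)⁻¹ • G ζ) c R :=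
    ContinuousOn.circleIntegrable hR <|
      ((continuousOn_id.sub continuousOn_const).inv₀ hζw).smul
        (hG.mono sphere_subset_closedBall)
  refine sub_eq_zero.1 (hφ _ fun k => ?_)
  rw [map_sub, map_smul, map_circleIntegral _ integrable, sub_eq_zero]
  simp only [map_smul]
  exact ((hφG k).mono closure_ball_subset_closedBall).diffContOnCl
    |>.two_pi_i_inv_smul_circleIntegral_sub_inv_smul hw

lemma differentiableOn_of_separating (hφ : ∀ x, (∀ k, φ k x = 0) → x = 0)
    {Ω : Set ℂ} (hΩ : IsOpen Ω) (hG : ContinuousOn G Ω)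
    (hφG : ∀ k, DifferentiableOn ℂ (fun z => φ k (G z)) Ω) : DifferentiableOn ℂ G Ω := by
  intro z hz
  obtain ⟨R, hR, hRΩ⟩ := nhds_basis_closedBall.mem_iff.1 (hΩ.mem_nhds hz)
  lift R to NNReal using hR.le
  have integrable : CircleIntegrable G z R :=
    (hG.mono (sphere_subset_closedBall.trans hRΩ)).circleIntegrable hR.le
  have cauchy : EqOn G (fun w => (2 * π * Complex.I : ℂ)⁻¹ • ∮ ζ in C(z, R), (ζ - w)⁻¹ • G ζ)
      (ball z R) := fun w hw =>
    (two_pi_I_inv_smul_circleIntegral_of_separating hφ (hG.mono hRΩ)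
      (fun k => (hφG k).mono hRΩ) hw).symm
  have analytic := (hasFPowerSeriesOn_cauchy_integral integrable (NNReal.coe_pos.1 hR)).analyticAt
  exact (analytic.differentiableAt.congr_of_eventuallyEq
    (cauchy.eventuallyEq_of_mem (ball_mem_nhds z hR))).differentiableWithinAt

end WeakHolomorphy

section BoundedFamilies

variable {ι X : Type*} [NormedAddCommGroup X]

lemma continuousOn_lp_infty_of_equicontinuousOn {α : Type*} [TopologicalSpace α] {S : Set α}
    {G : α → lp (fun _ : ι => X) ∞} (hG : EquicontinuousOn (fun i z => G z i) S) :
    ContinuousOn G S := by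
  intro z hz
  refine Metric.tendsto_nhds.2 fun ε hε => ?_
  filter_upwards [hG z hz _ (dist_mem_uniformity (half_pos hε))] with w hw
  rw [dist_comm, dist_eq_norm]
  refine (lp.norm_le_of_forall_le (half_pos hε).le fun i => ?_).trans_lt (half_lt_self hε)
  simpa [dist_eq_norm] using (hw i).le

/-- The subspace of `ℓ^∞(ι, X)` of the bounded families that converge along `l`, the analogue of
the space of convergent sequences. -/
def convergentSubmodule (𝕜 X : Type*) [NormedField 𝕜] [NormedAddCommGroup X] [NormedSpace 𝕜 X]
    (l : Filter ι) : Submodule 𝕜 (lp (fun _ : ι => X) ∞) where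
  carrier := {u | ∃ x, Tendsto (fun i => u i) l (𝓝 x)}
  add_mem' := fun ⟨x, hx⟩ ⟨y, hy⟩ => ⟨x + y, hx.add hy⟩
  zero_mem' := ⟨0, tendsto_const_nhds⟩
  smul_mem' := fun c _ ⟨x, hx⟩ => ⟨c • x, hx.const_smul c⟩

lemma isClosed_convergentSubmodule {𝕜 : Type*} [NormedField 𝕜] [NormedSpace 𝕜 X] [CompleteSpace X]
    (l : Filter ι) [l.NeBot] :
    IsClosed (convergentSubmodule 𝕜 X l : Set (lp (fun _ : ι => X) ∞)) := by
  refine isClosed_of_closure_subset fun u hu => cauchy_map_iff_exists_tendsto.1 ?_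
  refine Metric.cauchy_iff.2 ⟨inferInstance, fun ε hε => ?_⟩
  obtain ⟨v, ⟨x, hx⟩, huv⟩ := Metric.mem_closure_iff.1 hu (ε / 4) (by positivity)
  refine ⟨ball x (ε / 2), mem_map.2 ?_, fun a ha b hb => ?_⟩
  · filter_upwards [Metric.tendsto_nhds.1 hx (ε / 4) (by positivity)] with i hi
    have huvi : dist (u i) (v i) ≤ dist u v := by
      simpa using (lp.lipschitzWith_one_eval ∞ i).dist_le_mul u v
    rw [mem_preimage, mem_ball]
    linarith [dist_triangle (u i) (v i) x]
  · linarith [dist_triangle_right a b x, mem_ball.1 ha, mem_ball.1 hb]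

lemma exists_differentiableOn_lp_infty [NormedSpace ℂ X] [CompleteSpace X] {Ω : Set ℂ}
    {F : ι → ℂ → X} (hΩ : IsOpen Ω) (hF : ∀ i, DifferentiableOn ℂ (F i) Ω)
    (hbdd : IsLocallyBoundedOn F Ω) :
    ∃ G : ℂ → lp (fun _ : ι => X) ∞,
      DifferentiableOn ℂ G Ω ∧ ∀ z ∈ Ω, ∀ i, G z i = F i z := by
  classical
  have hmem : ∀ z ∈ Ω, Memℓp (fun i => F i z) ∞ := fun z hz => by
    obtain ⟨C, hC⟩ := hbdd z hz
    exact memℓp_infty ⟨C, forall_mem_range.2 (hC.self_of_nhdsWithin hz)⟩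
  let G : ℂ → lp (fun _ : ι => X) ∞ := fun z => if hz : z ∈ Ω then ⟨_, hmem z hz⟩ else 0
  have hG : ∀ z ∈ Ω, ∀ i, G z i = F i z := fun z hz i => by simp only [G, dif_pos hz]
  have hGeq : EquicontinuousOn (fun i z => G z i) Ω := by
    intro z hz U hU
    filter_upwards [hbdd.equicontinuousOn hΩ hF z hz U hU, self_mem_nhdsWithin] with w hw hwΩ i
    simpa only [hG w hwΩ, hG z hz] using hw i
  refine ⟨G, differentiableOn_of_separating (φ := lp.evalCLM ℂ (fun _ : ι => X) ∞)
    (fun u hu => lp.ext (funext hu)) hΩ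
    (continuousOn_lp_infty_of_equicontinuousOn hGeq)
    fun i => (hF i).congr fun z hz => hG z hz i, hG⟩

end BoundedFamilies

namespace IsUniquenessSet

variable {Ω N : Set ℂ} {E : Type*} [NormedAddCommGroup E] [NormedSpace ℂ E] {G : ℂ → E}

lemma eqOn_zero_of_differentiableOn (hN : IsUniquenessSet Ω N) (hG : DifferentiableOn ℂ G Ω)
    (hGN : EqOn G 0 N) : EqOn G 0 Ω := by
  intro z hz
  by_contra hne
  obtain ⟨φ, hφ⟩ := SeparatingDual.exists_ne_zero (R := ℂ) hne
  exact hφ <| hN.eqOn_zero (fun w => φ (G w)) (φ.differentiable.comp_differentiableOn hG)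
    (fun w hw => by simp [hGN hw]) hz

lemma mapsTo_submodule (hN : IsUniquenessSet Ω N) (hG : DifferentiableOn ℂ G Ω)
    {M : Submodule ℂ E} (hM : IsClosed (M : Set E)) (hGN : MapsTo G N M) : MapsTo G Ω M := by
  have := hM
  have eqOn_zero : EqOn (fun z => M.mkQL (G z)) 0 Ω :=
    hN.eqOn_zero_of_differentiableOn (M.mkQL.differentiable.comp_differentiableOn hG) fun z hz =>
      (Submodule.Quotient.mk_eq_zero M).2 (hGN hz)
  exact fun z hz => (Submodule.Quotient.mk_eq_zero M).1 (eqOn_zero hz)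

end IsUniquenessSet

lemma tendstoUniformlyOn_of_equicontinuousOn {ι α β : Type*} [TopologicalSpace α] [UniformSpace β]
    {K : Set α} {F : ι → α → β} {f : α → β} {l : Filter ι} (hK : IsCompact K)
    (hF : EquicontinuousOn F K) (hlim : ∀ z ∈ K, Tendsto (fun i => F i z) l (𝓝 (f z))) :
    TendstoUniformlyOn F f l K := by
  have h := (EquicontinuousOn.tendsto_uniformOnFun_iff_pi' (𝔖 := {K}) (by simpa) (by simpa) l f).2
    (tendsto_pi_nhds.2 fun z => hlim z (by simpa using z.2))
  exact UniformOnFun.tendsto_iff_tendstoUniformlyOn.1 h K rfl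

section Vitali

variable {ι X : Type*} [NormedAddCommGroup X] [NormedSpace ℂ X] [CompleteSpace X] {Ω N : Set ℂ}
  {l : Filter ι} [l.NeBot] {F : ι → ℂ → X}

lemma IsUniquenessSet.exists_tendsto (hN : IsUniquenessSet Ω N) (hΩ : IsOpen Ω)
    (hF : ∀ i, DifferentiableOn ℂ (F i) Ω) (hbdd : IsLocallyBoundedOn F Ω)
    (hlim : ∀ z ∈ N, ∃ x, Tendsto (fun i => F i z) l (𝓝 x)) :
    ∀ z ∈ Ω, ∃ x, Tendsto (fun i => F i z) l (𝓝 x) := by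
  obtain ⟨G, hGd, hG⟩ := exists_differentiableOn_lp_infty hΩ hF hbdd
  have mem_iff : ∀ z ∈ Ω,
      G z ∈ convergentSubmodule ℂ X l ↔ ∃ x, Tendsto (fun i => F i z) l (𝓝 x) := fun z hz => by
    simp only [← hG z hz]
    rfl
  have hGΩ := hN.mapsTo_submodule hGd (isClosed_convergentSubmodule l)
    fun z hz => (mem_iff z (hN.subset hz)).2 (hlim z hz)
  exact fun z hz => (mem_iff z hz).1 (hGΩ hz)

theorem vitali_holomorphic_general (hΩ : IsOpen Ω) (hN : IsUniquenessSet Ω N)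
    (hF : ∀ i, DifferentiableOn ℂ (F i) Ω) {g : ℂ → ℝ} (hg : LocallyIntegrableOn g Ω)
    (hbd : ∀ i, ∀ᵐ ξ ∂(volume.restrict Ω), ‖F i ξ‖ ≤ g ξ)
    (hlim : ∀ z ∈ N, ∃ x, Tendsto (fun i => F i z) l (𝓝 x)) :
    ∃ f : ℂ → X, DifferentiableOn ℂ f Ω ∧ TendstoLocallyUniformlyOn F f l Ω := by
  have hbdd : IsLocallyBoundedOn F Ω := isLocallyBoundedOn_of_ae_norm_le hΩ hF hg hbd
  choose! f hf using hN.exists_tendsto hΩ hF hbdd hlim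
  have hlu : TendstoLocallyUniformlyOn F f l Ω :=
    (tendstoLocallyUniformlyOn_iff_forall_isCompact hΩ).2 fun K hKΩ hK =>
      tendstoUniformlyOn_of_equicontinuousOn hK ((hbdd.equicontinuousOn hΩ hF).mono hKΩ)
        fun z hz => hf z (hKΩ hz)
  exact ⟨f, hlu.differentiableOn (.of_forall hF) hΩ, hlu⟩

end Vitali

/-- **Vitali, holomorphic case.** Let `Ω ⊆ ℂ` be open and connected and
let `(f_n)` be a locally `L¹`-bounded sequence of holomorphic functions `Ω → X`. If
`N ⊆ Ω` is a set of uniqueness for holomorphic functions and `lim f_n(z)` exists for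
every `z ∈ N`, then `(f_n)` converges uniformly on compact subsets of `Ω` to a
holomorphic limit. -/
theorem vitali_holomorphic
    {X : Type*} [NormedAddCommGroup X] [NormedSpace ℂ X] [CompleteSpace X]
    {Ω : Set ℂ} (hΩ : IsOpen Ω) (hΩconn : IsConnected Ω)
    (N : Set ℂ) (hNΩ : N ⊆ Ω)
    (hN : ∀ h : ℂ → ℂ, (∀ z ∈ Ω, DifferentiableAt ℂ h z) → (∀ z ∈ N, h z = 0) →
      ∀ z ∈ Ω, h z = 0)
    (F : ℕ → ℂ → X) (hol : ∀ n : ℕ, ∀ z ∈ Ω, DifferentiableAt ℂ (F n) z)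
    (g : ℂ → ℝ) (hg : LocallyIntegrableOn g Ω)
    (hbd : ∀ n : ℕ, ∀ᵐ ξ ∂(volume.restrict Ω), ‖F n ξ‖ ≤ g ξ)
    (hlim : ∀ z ∈ N, ∃ x : X, Tendsto (fun n => F n z) atTop (nhds x)) :
    ∃ f : ℂ → X, (∀ z ∈ Ω, DifferentiableAt ℂ f z) ∧
      ∀ K ⊆ Ω, IsCompact K → TendstoUniformlyOn (fun n z => F n z) f atTop K := by
  have uniqueness : IsUniquenessSet Ω N :=
    ⟨hNΩ, fun h hd => hN h fun z hz => hd.differentiableAt (hΩ.mem_nhds hz)⟩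
  obtain ⟨f, hf, hlu⟩ := vitali_holomorphic_general hΩ uniqueness
    (fun n z hz => (hol n z hz).differentiableWithinAt) hg hbd hlim
  exact ⟨f, fun z hz => hf.differentiableAt (hΩ.mem_nhds hz),
    (tendstoLocallyUniformlyOn_iff_forall_isCompact hΩ).1 hlu⟩
end

section
/- Let d ≥ 2, let X be a real Banach space, and let f ∈ C_c^∞(ℝ^d, X). Then the Newtonian potential Φ ∗ f belongs to C^∞(ℝ^d, X) and satisfies Δ(Φ ∗ f)(ξ) = f(ξ) for every ξ ∈ ℝ^d. -/
open MeasureTheory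

/-- The fundamental solution of the Laplace equation on `ℝ^d`. -/
noncomputable def fundSol (d : ℕ) (ξ : EuclideanSpace ℝ (Fin d)) : ℝ :=
  if d = 2 then (2 * Real.pi)⁻¹ * Real.log ‖ξ‖
  else ((d : ℝ) * ((2 : ℝ) - d) *
      (volume (Metric.ball (0 : EuclideanSpace ℝ (Fin d)) 1)).toReal)⁻¹ *
    ‖ξ‖ ^ ((2 : ℝ) - d)

/-!
Away from the origin `Φ` is differentiable with `∇Φ(y) = y / (d ω |y|^d)`, where `ω` is the volume
of the unit ball. Its singularity is so weak (`Φ(y) / |y|` is still locally integrable) that one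
integration by parts goes through across the origin, giving `∫ Φ Δg = -∫ ∇Φ · ∇g` for compactly
supported `g`. In polar coordinates the right-hand side is the spherical mean of
`-∫₀^∞ d/dr (g(rθ)) dr = g(0)`, so `∫ Φ Δg = g(0)`. The theorem follows by moving all derivatives of
`Φ ∗ f` onto `f` and taking `g = f(ξ - ·)`.
-/

open Filter Metric Module Set
open scoped Convolution Topology

section Puncture

variable {E X : Type*} [NormedAddCommGroup E] [NormedSpace ℝ E] [FiniteDimensional ℝ E]
  [NormedAddCommGroup X] [NormedSpace ℝ X]

/-- The smooth cutoff `1 - b (c • ·)` at scale `c⁻¹`, with `b` a fixed bump function at the origin: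
it vanishes near `0`, equals `1` away from `0`, and tends to `1` on the punctured space as
`c → ∞`. -/
noncomputable def punctureCutoff (c : ℝ) (y : E) : ℝ :=
  1 - (default : ContDiffBump (0 : E)) (c • y)

lemma contDiff_punctureCutoff (c : ℝ) : ContDiff ℝ 1 (punctureCutoff c : E → ℝ) :=
  contDiff_const.sub (ContDiffBump.contDiff _ |>.comp (contDiff_const_smul c))

lemma norm_punctureCutoff_le_one (c : ℝ) (y : E) : ‖punctureCutoff c y‖ ≤ 1 := by
  have h₀ := (default : ContDiffBump (0 : E)).nonneg (x := c • y)
  have h₁ := (default : ContDiffBump (0 : E)).le_one (x := c • y)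
  rw [punctureCutoff, Real.norm_eq_abs, abs_le]
  constructor <;> linarith

lemma punctureCutoff_eventuallyEq_zero (c : ℝ) : punctureCutoff c =ᶠ[𝓝 (0 : E)] 0 := by
  have hc : Tendsto (fun y : E ↦ c • y) (𝓝 0) (𝓝 0) :=
    (continuous_const_smul c).tendsto' 0 0 (smul_zero c)
  filter_upwards [hc.eventually (default : ContDiffBump (0 : E)).eventuallyEq_one] with y hy
  simp [punctureCutoff, hy]

lemma eventually_punctureCutoff_eventuallyEq_one {y : E} (hy : y ≠ 0) :
    ∀ᶠ c in atTop, punctureCutoff c =ᶠ[𝓝 y] 1 := by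
  set b : ContDiffBump (0 : E) := default
  have hlarge : Tendsto (fun c : ℝ ↦ c * ‖y‖) atTop atTop :=
    tendsto_id.atTop_mul_const (norm_pos_iff.2 hy)
  filter_upwards [hlarge.eventually_gt_atTop b.rOut, eventually_ge_atTop 0] with c hc hc₀
  have hcont : ContinuousAt (fun z : E ↦ c * ‖z‖) y := by fun_prop
  filter_upwards [hcont.eventually_const_lt hc] with z hz
  have hb : b (c • z) = 0 := b.zero_of_le_dist <| by
    rw [dist_zero_right, norm_smul, Real.norm_of_nonneg hc₀]; exact hz.le
  simp [punctureCutoff, b, hb]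

-- `‖z‖ * ‖D b z‖` is bounded by compactness, and it is invariant under dilations of `b`.
lemma exists_norm_fderiv_punctureCutoff_le :
    ∃ C, ∀ (c : ℝ) (y : E), ‖fderiv ℝ (punctureCutoff c) y‖ ≤ C * ‖y‖⁻¹ := by
  set b : ContDiffBump (0 : E) := default
  have hcont : Continuous fun z : E ↦ ‖z‖ * ‖fderiv ℝ b z‖ :=
    continuous_norm.mul (b.contDiff.continuous_fderiv one_ne_zero).norm
  obtain ⟨C, hC⟩ := hcont.bounded_above_of_compact_support
    (b.hasCompactSupport.fderiv ℝ).norm.mul_left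
  refine ⟨C, fun c y ↦ ?_⟩
  have hderiv : fderiv ℝ (punctureCutoff c) y = -(c • fderiv ℝ b (c • y)) := by
    rw [← fderiv_comp_smul]
    exact fderiv_const_sub 1
  rcases eq_or_ne y 0 with rfl | hy
  · simp [(punctureCutoff_eventuallyEq_zero c).fderiv_eq]
  · rw [le_mul_inv_iff₀ (norm_pos_iff.2 hy), hderiv, norm_neg]
    calc ‖c • fderiv ℝ b (c • y)‖ * ‖y‖ = ‖(‖c • y‖ * ‖fderiv ℝ b (c • y)‖)‖ := by
          simp only [norm_smul, norm_mul, norm_norm]; ring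
      _ ≤ C := hC _

variable [MeasurableSpace E] [BorelSpace E] {μ : Measure E} [μ.IsAddHaarMeasure]

lemma integral_smul_fderiv_eq_neg_of_eventuallyEq_zero {u : E → ℝ} {h : E → X} {v : E}
    (hu : ∀ y ≠ 0, DifferentiableAt ℝ u y) (hu_int : LocallyIntegrable u μ)
    (hu'_int : LocallyIntegrable (fun y ↦ fderiv ℝ u y v) μ)
    (hh : ContDiff ℝ 1 h) (hh_supp : HasCompactSupport h) (hh_zero : h =ᶠ[𝓝 0] 0) :
    ∫ y, u y • fderiv ℝ h y v ∂μ = -∫ y, fderiv ℝ u y v • h y ∂μ :=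
  integral_smul_fderiv_eq_neg_fderiv_smul_of_integrable
    (hu'_int.integrable_smul_right_of_hasCompactSupport hh.continuous hh_supp)
    (hu_int.integrable_smul_right_of_hasCompactSupport
      ((hh.continuous_fderiv one_ne_zero).clm_apply continuous_const) (hh_supp.fderiv_apply ℝ v))
    (hu_int.integrable_smul_right_of_hasCompactSupport hh.continuous hh_supp)
    (fun y hy ↦ hu y <| by rintro rfl; exact notMem_tsupport_iff_eventuallyEq.2 hh_zero hy)
    (fun _ _ ↦ hh.differentiable one_ne_zero _)

variable [Nontrivial E]

lemma locallyIntegrable_of_norm_inv_mul {u : E → ℝ}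
    (hu : LocallyIntegrable (fun y ↦ ‖y‖⁻¹ * u y) μ) : LocallyIntegrable u μ := by
  refine (hu.continuous_mul continuous_norm).congr ?_
  filter_upwards [μ.ae_ne 0] with y hy
  exact mul_inv_cancel_left₀ (norm_ne_zero_iff.2 hy) _

lemma tendsto_integral_smul_fderiv_punctureCutoff_smul {u : E → ℝ} {h : E → X} (v : E)
    (hu_int : LocallyIntegrable (fun y ↦ ‖y‖⁻¹ * u y) μ)
    (hh : ContDiff ℝ 1 h) (hh_supp : HasCompactSupport h) :
    Tendsto (fun c ↦ ∫ y, u y • fderiv ℝ (fun z ↦ punctureCutoff c z • h z) y v ∂μ) atTop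
      (𝓝 (∫ y, u y • fderiv ℝ h y v ∂μ)) := by
  obtain ⟨C, hC⟩ := exists_norm_fderiv_punctureCutoff_le (E := E)
  have hu := locallyIntegrable_of_norm_inv_mul hu_int
  have hh' : Continuous fun y ↦ fderiv ℝ h y v :=
    (hh.continuous_fderiv one_ne_zero).clm_apply continuous_const
  have hprod (c : ℝ) (y : E) : fderiv ℝ (fun z ↦ punctureCutoff c z • h z) y v =
      punctureCutoff c y • fderiv ℝ h y v + fderiv ℝ (punctureCutoff c) y v • h y := by
    rw [fderiv_fun_smul ((contDiff_punctureCutoff c).differentiable one_ne_zero y)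
      (hh.differentiable one_ne_zero y)]
    rfl
  refine tendsto_integral_filter_of_dominated_convergence
    (fun y ↦ ‖u y • fderiv ℝ h y v‖ + C * ‖v‖ * ‖(‖y‖⁻¹ * u y) • h y‖)
    (.of_forall fun c ↦ ?_) (.of_forall fun c ↦ .of_forall fun y ↦ ?_) ?_ ?_
  · have := ((contDiff_punctureCutoff c).smul hh).continuous_fderiv one_ne_zero
    exact hu.aestronglyMeasurable.smul (this.clm_apply continuous_const).aestronglyMeasurable
  · rw [hprod, smul_add]
    refine (norm_add_le _ _).trans (add_le_add ?_ ?_)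
    · rw [smul_comm, norm_smul]
      exact mul_le_of_le_one_left (norm_nonneg _) (norm_punctureCutoff_le_one c y)
    · calc ‖u y • fderiv ℝ (punctureCutoff c) y v • h y‖
          = ‖u y‖ * (‖fderiv ℝ (punctureCutoff c) y v‖ * ‖h y‖) := by simp only [norm_smul]
        _ ≤ ‖u y‖ * ((C * ‖y‖⁻¹ * ‖v‖) * ‖h y‖) := by
            gcongr; exact (fderiv ℝ (punctureCutoff c) y).le_of_opNorm_le (hC c y) v
        _ = C * ‖v‖ * ‖(‖y‖⁻¹ * u y) • h y‖ := by
            simp only [norm_smul, norm_mul, norm_inv, norm_norm]; ring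
  · exact (hu.integrable_smul_right_of_hasCompactSupport hh' (hh_supp.fderiv_apply ℝ v)).norm.add
      ((hu_int.integrable_smul_right_of_hasCompactSupport hh.continuous hh_supp).norm.const_mul _)
  · filter_upwards [μ.ae_ne 0] with y hy
    refine tendsto_nhds_of_eventually_eq ?_
    filter_upwards [eventually_punctureCutoff_eventuallyEq_one hy] with c hc
    simp [hprod, hc.fderiv_eq, hc.eq_of_nhds]

lemma tendsto_integral_smul_punctureCutoff_smul {w : E → ℝ} {h : E → X}
    (hw : LocallyIntegrable w μ) (hh : Continuous h) (hh_supp : HasCompactSupport h) :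
    Tendsto (fun c ↦ ∫ y, w y • punctureCutoff c y • h y ∂μ) atTop
      (𝓝 (∫ y, w y • h y ∂μ)) := by
  refine tendsto_integral_filter_of_dominated_convergence (fun y ↦ ‖w y • h y‖)
    (.of_forall fun c ↦ ?_) (.of_forall fun c ↦ .of_forall fun y ↦ ?_)
    (hw.integrable_smul_right_of_hasCompactSupport hh hh_supp).norm ?_
  · exact hw.aestronglyMeasurable.smul
      ((contDiff_punctureCutoff c).continuous.smul hh).aestronglyMeasurable
  · rw [smul_comm, norm_smul]
    exact mul_le_of_le_one_left (norm_nonneg _) (norm_punctureCutoff_le_one c y)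
  · filter_upwards [μ.ae_ne 0] with y hy
    refine tendsto_nhds_of_eventually_eq ?_
    filter_upwards [eventually_punctureCutoff_eventuallyEq_one hy] with c hc
    simp [hc.eq_of_nhds]

-- Since `‖D (punctureCutoff c) y‖ ≤ C * ‖y‖⁻¹`, integrability of `‖y‖⁻¹ * u y` lets the error term
-- vanish as `c → ∞` by dominated convergence; without it the origin could carry a Dirac mass.
theorem integral_smul_fderiv_eq_neg_of_differentiableAt_ne_zero {u : E → ℝ} {h : E → X} {v : E}
    (hu : ∀ y ≠ 0, DifferentiableAt ℝ u y)
    (hu_int : LocallyIntegrable (fun y ↦ ‖y‖⁻¹ * u y) μ)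
    (hu'_int : LocallyIntegrable (fun y ↦ fderiv ℝ u y v) μ)
    (hh : ContDiff ℝ 1 h) (hh_supp : HasCompactSupport h) :
    ∫ y, u y • fderiv ℝ h y v ∂μ = -∫ y, fderiv ℝ u y v • h y ∂μ := by
  refine tendsto_nhds_unique
    (tendsto_integral_smul_fderiv_punctureCutoff_smul v hu_int hh hh_supp)
    ((tendsto_integral_smul_punctureCutoff_smul hu'_int hh.continuous hh_supp).neg.congr fun c ↦
      (integral_smul_fderiv_eq_neg_of_eventuallyEq_zero hu
        (locallyIntegrable_of_norm_inv_mul hu_int) hu'_int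
        ((contDiff_punctureCutoff c).smul hh) hh_supp.smul_left ?_).symm)
  filter_upwards [punctureCutoff_eventuallyEq_zero c] with y hy
  simp [hy]

end Puncture

section Polar

variable {E X : Type*} [NormedAddCommGroup E] [NormedSpace ℝ E]
  [NormedAddCommGroup X] [NormedSpace ℝ X]

lemma integral_volumeIoiPow (n : ℕ) (φ : ℝ → X) :
    ∫ r : Ioi (0 : ℝ), φ r ∂.volumeIoiPow n = ∫ r in Ioi (0 : ℝ), r ^ n • φ r := by
  simp only [Measure.volumeIoiPow, ENNReal.ofReal]
  rw [integral_withDensity_eq_integral_smul (measurable_subtype_coe.pow_const _).real_toNNReal,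
    integral_subtype_comap measurableSet_Ioi fun r ↦ Real.toNNReal (r ^ n) • φ r]
  refine setIntegral_congr_fun measurableSet_Ioi fun r hr ↦ ?_
  rw [NNReal.smul_def, Real.coe_toNNReal _ (pow_nonneg hr.out.le _)]

lemma integral_Ioi_fderiv_smul [CompleteSpace X] {g : E → X} (hg : ContDiff ℝ 1 g)
    (hg_supp : HasCompactSupport g) {θ : E} (hθ : θ ≠ 0) :
    ∫ r in Ioi (0 : ℝ), fderiv ℝ g (r • θ) θ = -g 0 := by
  have hray : HasCompactSupport fun r : ℝ ↦ g (r • θ) :=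
    hg_supp.comp_isClosedEmbedding (isClosedEmbedding_smul_left hθ)
  have hderiv (r : ℝ) : deriv (fun r : ℝ ↦ g (r • θ)) r = fderiv ℝ g (r • θ) θ := by
    have hline : HasDerivAt (fun r : ℝ ↦ r • θ) θ r := by
      simpa using (hasDerivAt_id r).smul_const θ
    exact ((hg.differentiable one_ne_zero _).hasFDerivAt.comp_hasDerivAt r hline).deriv
  have hsmooth : ContDiff ℝ 1 fun r : ℝ ↦ g (r • θ) := hg.comp (by fun_prop)
  simpa only [hderiv, zero_smul] using hray.integral_Ioi_deriv_eq hsmooth 0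

variable [FiniteDimensional ℝ E] [Nontrivial E] [MeasurableSpace E] [BorelSpace E]
  (μ : Measure E) [μ.IsAddHaarMeasure]

theorem integral_eq_integral_toSphere_integral_Ioi {F : E → X} (hF : Integrable F μ) :
    ∫ y, F y ∂μ =
      ∫ θ : sphere (0 : E) 1,
        (∫ r in Ioi (0 : ℝ), r ^ (finrank ℝ E - 1) • F (r • θ.1)) ∂μ.toSphere := by
  let G : sphere (0 : E) 1 × Ioi (0 : ℝ) → X := fun p ↦ F (p.2.1 • p.1.1)
  have hG : G ∘ homeomorphUnitSphereProd E = F ∘ Subtype.val := by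
    ext y
    simp [G, smul_smul, norm_ne_zero_iff.2 y.2]
  have hmp := μ.measurePreserving_homeomorphUnitSphereProd
  have hemb := (homeomorphUnitSphereProd E).measurableEmbedding
  have hG_int : Integrable G (μ.toSphere.prod (.volumeIoiPow (finrank ℝ E - 1))) := by
    rw [← hmp.integrable_comp_emb hemb, hG,
      ← integrableOn_iff_comap_subtypeVal (measurableSet_singleton _).compl]
    exact hF.integrableOn
  calc ∫ y, F y ∂μ = ∫ y : ({0}ᶜ : Set E), (F ∘ Subtype.val) y ∂μ.comap Subtype.val := by
        simp only [Function.comp_apply]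
        rw [integral_subtype_comap (measurableSet_singleton _).compl F, restrict_compl_singleton]
    _ = ∫ p, G p ∂μ.toSphere.prod (.volumeIoiPow (finrank ℝ E - 1)) := by
        rw [← hG]
        exact hmp.integral_comp hemb G
    _ = ∫ θ, ∫ r, G (θ, r) ∂.volumeIoiPow (finrank ℝ E - 1) ∂μ.toSphere := integral_prod _ hG_int
    _ = _ := integral_congr_ae (.of_forall fun θ ↦ integral_volumeIoiPow _ fun r ↦ F (r • θ.1))

variable {μ}

lemma locallyIntegrable_norm_rpow {p : ℝ} (hp : -(finrank ℝ E : ℝ) < p) :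
    LocallyIntegrable (fun y : E ↦ ‖y‖ ^ p) μ := by
  refine locallyIntegrable_of_norm_le_rpow (C := 1) (α := -p) finrank_pos (by linarith)
    (.of_forall fun y ↦ ?_) (measurable_norm.pow_const p).aestronglyMeasurable
  rw [neg_neg, one_mul, Real.norm_of_nonneg (by positivity)]

lemma abs_log_le_rpow_add_rpow_neg_div {r ε : ℝ} (hr : 0 < r) (hε : 0 < ε) :
    |Real.log r| ≤ (r ^ ε + r ^ (-ε)) / ε := by
  have hlog := Real.log_le_rpow_div hr.le hε
  have hlog_inv := Real.log_le_rpow_div (inv_nonneg.2 hr.le) hε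
  rw [Real.log_inv, Real.inv_rpow hr.le, ← Real.rpow_neg hr.le] at hlog_inv
  have hpos : 0 ≤ r ^ ε / ε := by positivity
  have hneg : 0 ≤ r ^ (-ε) / ε := by positivity
  rw [add_div, abs_le]
  constructor <;> linarith

lemma locallyIntegrable_norm_rpow_mul_log_norm {p : ℝ} (hp : -(finrank ℝ E : ℝ) < p) :
    LocallyIntegrable (fun y : E ↦ ‖y‖ ^ p * Real.log ‖y‖) μ := by
  obtain ⟨ε, hε, hpε⟩ : ∃ ε, 0 < ε ∧ -(finrank ℝ E : ℝ) < p - ε :=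
    ⟨(p + finrank ℝ E) / 2, by linarith, by linarith⟩
  have hpow : LocallyIntegrable (fun y : E ↦ ε⁻¹ * (‖y‖ ^ (p + ε) + ‖y‖ ^ (p - ε))) μ :=
    ((locallyIntegrable_norm_rpow (by linarith)).add (locallyIntegrable_norm_rpow hpε)).smul ε⁻¹
  refine hpow.mono ((measurable_norm.pow_const p).mul
    (Real.measurable_log.comp measurable_norm)).aestronglyMeasurable ?_
  filter_upwards [μ.ae_ne 0] with y hy
  have hy' := norm_pos_iff.2 hy
  calc ‖‖y‖ ^ p * Real.log ‖y‖‖ = ‖y‖ ^ p * |Real.log ‖y‖| := by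
        rw [norm_mul, Real.norm_of_nonneg (by positivity), Real.norm_eq_abs]
    _ ≤ ‖y‖ ^ p * ((‖y‖ ^ ε + ‖y‖ ^ (-ε)) / ε) := by
        gcongr; exact abs_log_le_rpow_add_rpow_neg_div hy' hε
    _ = ε⁻¹ * (‖y‖ ^ (p + ε) + ‖y‖ ^ (p - ε)) := by
        rw [sub_eq_add_neg, Real.rpow_add hy', Real.rpow_add hy']; ring
    _ ≤ _ := le_abs_self _

lemma locallyIntegrable_norm_pow_finrank_inv_smul :
    LocallyIntegrable (fun y : E ↦ (‖y‖ ^ finrank ℝ E)⁻¹ • y) μ := by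
  refine (locallyIntegrable_norm_rpow (p := 1 - finrank ℝ E) (by linarith)).mono
    ((measurable_norm.pow_const _).inv.smul measurable_id).aestronglyMeasurable ?_
  filter_upwards [μ.ae_ne 0] with y hy
  rw [norm_smul, norm_inv, norm_pow, norm_norm, Real.rpow_sub (norm_pos_iff.2 hy), Real.rpow_one,
    Real.rpow_natCast, Real.norm_of_nonneg (by positivity), div_eq_inv_mul]

lemma integrable_norm_pow_finrank_inv_smul_fderiv {g : E → X} (hg : ContDiff ℝ 1 g)
    (hg_supp : HasCompactSupport g) :
    Integrable (fun y ↦ (‖y‖ ^ finrank ℝ E)⁻¹ • fderiv ℝ g y y) μ := by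
  have hg' := hg.continuous_fderiv one_ne_zero
  have hker : LocallyIntegrable (fun y : E ↦ (‖y‖ ^ finrank ℝ E)⁻¹ • y) μ :=
    locallyIntegrable_norm_pow_finrank_inv_smul
  have hker_norm := hker.mono hker.aestronglyMeasurable.norm (.of_forall fun y ↦ (norm_norm _).le)
  refine (hker_norm.integrable_smul_right_of_hasCompactSupport hg'.norm
    (hg_supp.fderiv ℝ).norm).mono' ?_ (.of_forall fun y ↦ ?_)
  · exact (measurable_norm.pow_const _).inv.aestronglyMeasurable.smul
      (hg'.clm_apply continuous_id).aestronglyMeasurable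
  · rw [← map_smul, smul_eq_mul, mul_comm]
    exact (fderiv ℝ g y).le_opNorm _

theorem integral_norm_pow_finrank_inv_smul_fderiv [CompleteSpace X] {g : E → X}
    (hg : ContDiff ℝ 1 g) (hg_supp : HasCompactSupport g) :
    ∫ y, (‖y‖ ^ finrank ℝ E)⁻¹ • fderiv ℝ g y y ∂μ =
      -((finrank ℝ E * μ.real (ball 0 1)) • g 0) := by
  have hray (θ : sphere (0 : E) 1) : ∫ r in Ioi (0 : ℝ), r ^ (finrank ℝ E - 1) •
      (‖r • θ.1‖ ^ finrank ℝ E)⁻¹ • fderiv ℝ g (r • θ.1) (r • θ.1) = -g 0 := by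
    rw [← integral_Ioi_fderiv_smul hg hg_supp (ne_zero_of_mem_unit_sphere θ)]
    refine setIntegral_congr_fun measurableSet_Ioi fun r (hr : 0 < r) ↦ ?_
    have hcancel : r ^ (finrank ℝ E - 1) * ((r ^ finrank ℝ E)⁻¹ * r) = 1 := by
      rw [mul_comm _ r, ← mul_assoc, pow_sub_one_mul finrank_pos.ne',
        mul_inv_cancel₀ (by positivity)]
    simp only [norm_smul, norm_eq_of_mem_sphere, mul_one, Real.norm_of_nonneg hr.le, map_smul,
      smul_smul, hcancel, one_smul]
  rw [integral_eq_integral_toSphere_integral_Ioi μ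
    (integrable_norm_pow_finrank_inv_smul_fderiv hg hg_supp)]
  simp only [hray, integral_const, μ.toSphere_real_apply_univ, smul_neg]

end Polar

section NormDeriv

variable {F : Type*} [NormedAddCommGroup F] [InnerProductSpace ℝ F] {y : F}

lemma hasFDerivAt_norm_of_ne_zero (hy : y ≠ 0) :
    HasFDerivAt (fun z : F ↦ ‖z‖) (‖y‖⁻¹ • innerSL ℝ y) y := by
  have hsqrt := (hasStrictFDerivAt_norm_sq y).hasFDerivAt.sqrt (by positivity)
  simp only [Real.sqrt_sq (norm_nonneg _)] at hsqrt
  refine hsqrt.congr_fderiv ?_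
  ext z
  simp only [one_div, mul_inv_rev, smul_apply, coe_innerSL_apply, nsmul_eq_mul, Nat.cast_ofNat,
    smul_eq_mul]
  field_simp

lemma hasFDerivAt_log_norm (hy : y ≠ 0) :
    HasFDerivAt (fun z : F ↦ Real.log ‖z‖) ((‖y‖ ^ 2)⁻¹ • innerSL ℝ y) y := by
  refine ((hasFDerivAt_norm_of_ne_zero hy).log (norm_ne_zero_iff.2 hy)).congr_fderiv ?_
  rw [smul_smul, sq, mul_inv]

lemma hasFDerivAt_norm_rpow_of_ne_zero (p : ℝ) (hy : y ≠ 0) :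
    HasFDerivAt (fun z : F ↦ ‖z‖ ^ p) ((p * ‖y‖ ^ (p - 2)) • innerSL ℝ y) y := by
  have hy' := norm_pos_iff.2 hy
  refine ((hasFDerivAt_norm_of_ne_zero hy).rpow_const (.inl hy'.ne')).congr_fderiv ?_
  rw [smul_smul, mul_assoc, ← div_eq_mul_inv,
    ← Real.rpow_sub_one hy'.ne', sub_sub, one_add_one_eq_two]

end NormDeriv

section Reflection

variable {𝕜 E X : Type*} [NontriviallyNormedField 𝕜] [NormedAddCommGroup E] [NormedSpace 𝕜 E]
  [NormedAddCommGroup X] [NormedSpace 𝕜 X]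

lemma fderiv_comp_const_sub (u : E → X) (a x : E) :
    fderiv 𝕜 (fun y ↦ u (a - y)) x = -fderiv 𝕜 u (a - x) := by
  have hreflect : (fun y ↦ u (a - y)) = fun y ↦ (fun z ↦ u (a + z)) ((-1 : 𝕜) • y) := by
    simp [sub_eq_add_neg]
  rw [hreflect, fderiv_comp_smul (f := fun z ↦ u (a + z)), fderiv_comp_add_left]
  simp [sub_eq_add_neg]

end Reflection

section ConvolutionDeriv

variable {𝕜 E X₁ X₂ X : Type*} [RCLike 𝕜] [NormedAddCommGroup E] [NormedSpace 𝕜 E]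
  [MeasurableSpace E] [BorelSpace E] {μ : Measure E} [SFinite μ] [μ.IsAddLeftInvariant]
  [NormedAddCommGroup X₁] [NormedSpace 𝕜 X₁] [NormedAddCommGroup X₂] [NormedSpace 𝕜 X₂]
  [NormedAddCommGroup X] [NormedSpace 𝕜 X] [NormedSpace ℝ X]

lemma fderiv_convolution_apply (L : X₁ →L[𝕜] X₂ →L[𝕜] X) {u : E → X₁} {g : E → X₂}
    (hu : LocallyIntegrable u μ) (hg : ContDiff 𝕜 1 g) (hg_supp : HasCompactSupport g) (x v : E) :
    fderiv 𝕜 (u ⋆[L, μ] g) x v = (u ⋆[L, μ] fun y ↦ fderiv 𝕜 g y v) x := by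
  rw [(hg_supp.hasFDerivAt_convolution_right L hu hg x).fderiv]
  exact convolution_precompR_apply L hu (hg_supp.fderiv 𝕜) (hg.continuous_fderiv one_ne_zero) x v

end ConvolutionDeriv

section Laplacian

variable {d : ℕ} {X : Type*} [NormedAddCommGroup X] [NormedSpace ℝ X]

lemma sum_inner_stdBasis_smul_apply (L : EuclideanSpace ℝ (Fin d) →L[ℝ] X)
    (y : EuclideanSpace ℝ (Fin d)) : ∑ i, inner ℝ y (stdBasis i) • L (stdBasis i) = L y := by
  simpa [stdBasis, real_inner_comm] using
    congr(L $((EuclideanSpace.basisFun (Fin d) ℝ).sum_repr' y))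

lemma lap_comp_const_sub (u : EuclideanSpace ℝ (Fin d) → X) (a x : EuclideanSpace ℝ (Fin d)) :
    lap (fun y ↦ u (a - y)) x = lap u (a - x) := by
  refine Finset.sum_congr rfl fun i _ ↦ ?_
  simp only [fderiv_comp_const_sub, neg_apply, fderiv_fun_neg,
    fderiv_comp_const_sub (fun z ↦ fderiv ℝ u z (stdBasis i)), neg_neg]

theorem lap_convolution {u : EuclideanSpace ℝ (Fin d) → ℝ} {f : EuclideanSpace ℝ (Fin d) → X}
    (hu : LocallyIntegrable u) (hf : ContDiff ℝ 2 f) (hf_supp : HasCompactSupport f)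
    (x : EuclideanSpace ℝ (Fin d)) :
    lap (u ⋆[ContinuousLinearMap.lsmul ℝ ℝ] f) x =
      (u ⋆[ContinuousLinearMap.lsmul ℝ ℝ] lap f) x := by
  have hpartial (i : Fin d) : ContDiff ℝ 1 fun y ↦ fderiv ℝ f y (stdBasis i) :=
    (hf.fderiv_right one_add_one_eq_two.le).clm_apply contDiff_const
  have hpartial_supp (i : Fin d) : HasCompactSupport fun y ↦ fderiv ℝ f y (stdBasis i) :=
    hf_supp.fderiv_apply ℝ _
  have hsecond (i : Fin d) : ConvolutionExists u
      (fun y ↦ fderiv ℝ (fun z ↦ fderiv ℝ f z (stdBasis i)) y (stdBasis i))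
      (ContinuousLinearMap.lsmul ℝ ℝ) :=
    ((hpartial_supp i).fderiv_apply ℝ _).convolutionExists_right _ hu
      (((hpartial i).continuous_fderiv one_ne_zero).clm_apply continuous_const)
  simp only [lap, fderiv_convolution_apply _ hu (hf.of_le one_le_two) hf_supp,
    fderiv_convolution_apply _ hu (hpartial _) (hpartial_supp _)]
  simp only [convolution_def, map_sum, lap]
  exact (integral_finsetSum _ fun i _ ↦ hsecond i x).symm

theorem integral_smul_lap_eq_neg [NeZero d] {u : EuclideanSpace ℝ (Fin d) → ℝ}
    {g : EuclideanSpace ℝ (Fin d) → X} (hu : ∀ y ≠ 0, DifferentiableAt ℝ u y)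
    (hu_int : LocallyIntegrable fun y ↦ ‖y‖⁻¹ * u y)
    (hu'_int : ∀ v, LocallyIntegrable fun y ↦ fderiv ℝ u y v)
    (hg : ContDiff ℝ 2 g) (hg_supp : HasCompactSupport g) :
    ∫ y, u y • lap g y =
      -∫ y, ∑ i, fderiv ℝ u y (stdBasis i) • fderiv ℝ g y (stdBasis i) := by
  have hpartial (i : Fin d) : ContDiff ℝ 1 fun y ↦ fderiv ℝ g y (stdBasis i) :=
    (hg.fderiv_right one_add_one_eq_two.le).clm_apply contDiff_const
  have hpartial_supp (i : Fin d) : HasCompactSupport fun y ↦ fderiv ℝ g y (stdBasis i) :=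
    hg_supp.fderiv_apply ℝ _
  calc ∫ y, u y • lap g y
      = ∑ i, ∫ y, u y • fderiv ℝ (fun z ↦ fderiv ℝ g z (stdBasis i)) y (stdBasis i) := by
        simp only [lap, Finset.smul_sum]
        exact integral_finsetSum _ fun i _ ↦
          (locallyIntegrable_of_norm_inv_mul hu_int).integrable_smul_right_of_hasCompactSupport
            (((hpartial i).continuous_fderiv one_ne_zero).clm_apply continuous_const)
            ((hpartial_supp i).fderiv_apply ℝ _)
    _ = ∑ i, -∫ y, fderiv ℝ u y (stdBasis i) • fderiv ℝ g y (stdBasis i) :=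
        Finset.sum_congr rfl fun i _ ↦ integral_smul_fderiv_eq_neg_of_differentiableAt_ne_zero
          hu hu_int (hu'_int _) (hpartial i) (hpartial_supp i)
    _ = -∫ y, ∑ i, fderiv ℝ u y (stdBasis i) • fderiv ℝ g y (stdBasis i) := by
        rw [Finset.sum_neg_distrib, integral_finsetSum]
        exact fun i _ ↦ (hu'_int _).integrable_smul_right_of_hasCompactSupport
          (hpartial i).continuous (hpartial_supp i)

end Laplacian

section FundSol

variable {d : ℕ}

lemma hasFDerivAt_fundSol {y : EuclideanSpace ℝ (Fin d)} (hy : y ≠ 0) :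
    HasFDerivAt (fundSol d) ((d * volume.real (ball (0 : EuclideanSpace ℝ (Fin d)) 1))⁻¹ •
      (‖y‖ ^ d)⁻¹ • innerSL ℝ y) y := by
  unfold fundSol
  split_ifs with h
  · subst h
    refine ((hasFDerivAt_log_norm hy).const_mul _).congr_fderiv ?_
    simp [Measure.real, EuclideanSpace.volume_ball_fin_two, ENNReal.toReal_ofReal Real.pi_nonneg,
      mul_comm]
  · refine ((hasFDerivAt_norm_rpow_of_ne_zero (2 - d) hy).const_mul _).congr_fderiv ?_
    have h' : (2 : ℝ) - d ≠ 0 := sub_ne_zero.2 (by exact_mod_cast Ne.symm h)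
    rw [sub_sub_cancel_left, Real.rpow_neg (norm_nonneg y), Real.rpow_natCast, smul_smul, smul_smul,
      Measure.real]
    congr 1
    field_simp

lemma locallyIntegrable_norm_inv_mul_fundSol [NeZero d] :
    LocallyIntegrable fun y : EuclideanSpace ℝ (Fin d) ↦ ‖y‖⁻¹ * fundSol d y := by
  unfold fundSol
  split_ifs with h
  · subst h
    refine ((locallyIntegrable_norm_rpow_mul_log_norm (p := -1) (by norm_num)).smul
      (2 * Real.pi)⁻¹).congr (.of_forall fun y ↦ ?_)
    simp only [Pi.smul_apply, Real.rpow_neg_one, smul_eq_mul]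
    ring
  · refine ((locallyIntegrable_norm_rpow (p := 1 - d) (by simp)).smul
      (d * (2 - d) * (volume (ball (0 : EuclideanSpace ℝ (Fin d)) 1)).toReal)⁻¹).congr ?_
    filter_upwards [volume.ae_ne 0] with y hy
    rw [Pi.smul_apply, smul_eq_mul, mul_left_comm, ← Real.rpow_neg_one ‖y‖,
      ← Real.rpow_add (norm_pos_iff.2 hy)]
    ring_nf

lemma locallyIntegrable_fundSol [NeZero d] : LocallyIntegrable (fundSol d) :=
  locallyIntegrable_of_norm_inv_mul locallyIntegrable_norm_inv_mul_fundSol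

lemma locallyIntegrable_fderiv_fundSol_apply [NeZero d] (v : EuclideanSpace ℝ (Fin d)) :
    LocallyIntegrable fun y ↦ fderiv ℝ (fundSol d) y v := by
  have hker : LocallyIntegrable (fun y : EuclideanSpace ℝ (Fin d) ↦ (‖y‖ ^ d)⁻¹ • y) := by
    simpa only [finrank_euclideanSpace_fin] using
      locallyIntegrable_norm_pow_finrank_inv_smul (E := EuclideanSpace ℝ (Fin d)) (μ := volume)
  have hker_inner : LocallyIntegrable fun y ↦ innerSL ℝ v ((‖y‖ ^ d)⁻¹ • y) := fun y ↦
    let ⟨s, hs, hs_int⟩ := hker y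
    ⟨s, hs, (innerSL ℝ v).integrable_comp hs_int⟩
  refine (hker_inner.smul (d * volume.real (ball (0 : EuclideanSpace ℝ (Fin d)) 1))⁻¹).congr ?_
  filter_upwards [volume.ae_ne 0] with y hy
  simp [(hasFDerivAt_fundSol hy).fderiv, real_inner_comm]

variable {X : Type*} [NormedAddCommGroup X] [NormedSpace ℝ X]

lemma sum_fderiv_fundSol_smul_apply {y : EuclideanSpace ℝ (Fin d)} (hy : y ≠ 0)
    (L : EuclideanSpace ℝ (Fin d) →L[ℝ] X) :
    ∑ i, fderiv ℝ (fundSol d) y (stdBasis i) • L (stdBasis i) =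
      (d * volume.real (ball (0 : EuclideanSpace ℝ (Fin d)) 1))⁻¹ • (‖y‖ ^ d)⁻¹ • L y := by
  simp [(hasFDerivAt_fundSol hy).fderiv, mul_smul, ← Finset.smul_sum,
    sum_inner_stdBasis_smul_apply]

theorem integral_fundSol_smul_lap [NeZero d] [CompleteSpace X]
    {g : EuclideanSpace ℝ (Fin d) → X} (hg : ContDiff ℝ 2 g) (hg_supp : HasCompactSupport g) :
    ∫ y, fundSol d y • lap g y = g 0 := by
  have harea : d * volume.real (ball (0 : EuclideanSpace ℝ (Fin d)) 1) ≠ 0 :=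
    mul_ne_zero (NeZero.ne _)
      ((measureReal_ne_zero_iff measure_ball_lt_top.ne).2 (measure_ball_pos _ _ one_pos).ne')
  have hpolar := integral_norm_pow_finrank_inv_smul_fderiv (μ := volume)
    (hg.of_le one_le_two) hg_supp
  rw [finrank_euclideanSpace_fin] at hpolar
  calc ∫ y, fundSol d y • lap g y
      = -∫ y, ∑ i, fderiv ℝ (fundSol d) y (stdBasis i) • fderiv ℝ g y (stdBasis i) :=
        integral_smul_lap_eq_neg (fun y hy ↦ (hasFDerivAt_fundSol hy).differentiableAt)
          locallyIntegrable_norm_inv_mul_fundSol locallyIntegrable_fderiv_fundSol_apply hg hg_supp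
    _ = -∫ y, (d * volume.real (ball (0 : EuclideanSpace ℝ (Fin d)) 1))⁻¹ •
          (‖y‖ ^ d)⁻¹ • fderiv ℝ g y y := by
        congr 1
        refine integral_congr_ae ?_
        filter_upwards [volume.ae_ne 0] with y hy
        exact sum_fderiv_fundSol_smul_apply hy _
    _ = g 0 := by rw [integral_smul, hpolar, smul_neg, neg_neg, inv_smul_smul₀ harea]

end FundSol

section NewtonianPotential

variable {d : ℕ} {X : Type*} [NormedAddCommGroup X] [NormedSpace ℝ X] [CompleteSpace X]

theorem newtonian_potential_smooth_general [NeZero d] {n : ℕ∞} (hn : 2 ≤ n)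
    (f : EuclideanSpace ℝ (Fin d) → X) (hf : ContDiff ℝ n f) (hsupp : HasCompactSupport f) :
    ContDiff ℝ n (fun ξ ↦ ∫ η, fundSol d (ξ - η) • f η) ∧
    ∀ ξ : EuclideanSpace ℝ (Fin d),
      lap (fun ζ ↦ ∫ η, fundSol d (ζ - η) • f η) ξ = f ξ := by
  have hf₂ : ContDiff ℝ 2 f := hf.of_le (WithTop.coe_le_coe.2 hn)
  have hswap : (fun ξ ↦ ∫ η, fundSol d (ξ - η) • f η) =
      fundSol d ⋆[ContinuousLinearMap.lsmul ℝ ℝ] f := by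
    ext ξ
    exact convolution_lsmul_swap.symm
  rw [hswap]
  refine ⟨hsupp.contDiff_convolution_right _ locallyIntegrable_fundSol hf, fun ξ ↦ ?_⟩
  calc lap (fundSol d ⋆[ContinuousLinearMap.lsmul ℝ ℝ] f) ξ
      = (fundSol d ⋆[ContinuousLinearMap.lsmul ℝ ℝ] lap f) ξ :=
        lap_convolution locallyIntegrable_fundSol hf₂ hsupp ξ
    _ = ∫ η, fundSol d η • lap (fun ζ ↦ f (ξ - ζ)) η := by
        simp only [convolution_def, ContinuousLinearMap.lsmul_apply, lap_comp_const_sub]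
    _ = f (ξ - 0) := integral_fundSol_smul_lap (hf₂.comp (by fun_prop))
        (hsupp.comp_homeomorph (Homeomorph.subLeft ξ))
    _ = f ξ := by rw [sub_zero]

end NewtonianPotential

/-- For `f ∈ C_c^∞(ℝ^d, X)`, the Newtonian potential `Φ ∗ f` is
`C^∞` and satisfies `Δ(Φ ∗ f) = f` everywhere. -/
theorem newtonian_potential_smooth {d : ℕ} (hd : 2 ≤ d)
    {X : Type*} [NormedAddCommGroup X] [NormedSpace ℝ X] [CompleteSpace X]
    (f : EuclideanSpace ℝ (Fin d) → X) (hf : ContDiff ℝ (⊤ : ℕ∞) f)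
    (hsupp : HasCompactSupport f) :
    ContDiff ℝ (⊤ : ℕ∞) (fun ξ => ∫ η, fundSol d (ξ - η) • f η) ∧
    ∀ ξ : EuclideanSpace ℝ (Fin d),
      lap (fun ζ => ∫ η, fundSol d (ζ - η) • f η) ξ = f ξ := by
  have : NeZero d := ⟨by omega⟩
  exact newtonian_potential_smooth_general (n := ⊤) le_top f hf hsupp
end
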